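/- Let n ≥ 2 and let C ⊂ ℝⁿ be an irrational simplicial cone with Klein polyhedron K and sail Π. Let v be a vertex of Π contained in exactly m edges of K (in particular, in only finitely many edges), with primitive integer direction vectors r₁,…,r_m, and let F be an (n−1)-dimensional face of K with v ∈ F. Then the subgroup of ℤⁿ generated by ℤⁿ ∩ aff(F) has finite index ρ(F,0) in ℤⁿ, and ρ(F,0) < (n · det oSt_v)^{8·n!}. -/

import Mathlib

open Set Function

noncomputable section

/-- Points of `ℝⁿ`. -/
abbrev Vec (n : ℕ) := Fin n → ℝ

/-- A point of `ℝⁿ` with all coordinates integer, i.e. a point of `ℤⁿ`. -/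
def IsIntVec {n : ℕ} (x : Vec n) : Prop := ∀ i, ∃ m : ℤ, x i = (m : ℝ)

/-- The canonical embedding of `ℤⁿ` into `ℝⁿ`. -/
def intCast {n : ℕ} (y : Fin n → ℤ) : Vec n := fun i => (y i : ℝ)

/-- The standard inner product on `ℝⁿ`. -/
def dot {n : ℕ} (x y : Vec n) : ℝ := ∑ i, x i * y i

/-- An integer vector is primitive if the gcd of its coordinates is `1`, i.e. every common
divisor of the coordinates is a unit. -/
def IsPrimitiveVec {n : ℕ} (r : Fin n → ℤ) : Prop :=
  ∀ d : ℤ, (∀ i, d ∣ r i) → IsUnit d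

/-- `E` is a face of `K` of dimension `d`: a convex extreme subset of `K`
whose affine hull has dimension `d`. -/
def IsFaceDim {n : ℕ} (K E : Set (Vec n)) (d : ℕ) : Prop :=
  IsExtreme ℝ K E ∧ Convex ℝ E ∧ Module.finrank ℝ (affineSpan ℝ E).direction = d

/-- The vertex `v` of `P` is contained in exactly the `m` (pairwise distinct) edges
`E 0, …, E (m-1)` of `P`, and `r j` is the primitive integer direction vector of `E j`
emanating from `v`. -/
def HasEdgeData {n m : ℕ} (P : Set (Vec n)) (v : Vec n)
    (E : Fin m → Set (Vec n)) (r : Fin m → (Fin n → ℤ)) : Prop :=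
  Function.Injective E ∧
  (∀ j, IsFaceDim P (E j) 1 ∧ v ∈ E j ∧ IsPrimitiveVec (r j) ∧
    E j ⊆ {x | ∃ t : ℝ, 0 ≤ t ∧ x = v + t • intCast (r j)}) ∧
  (∀ F, IsFaceDim P F 1 → v ∈ F → ∃ j, F = E j)

open Classical in
/-- The determinant of the edge star of a vertex with primitive edge direction vectors
`r 0, …, r (m-1)`:  `∑_{1 ≤ i₁ < … < iₙ ≤ m} |det (r i₁, …, r iₙ)|`. -/
def starDet {n m : ℕ} (r : Fin m → (Fin n → ℤ)) : ℤ :=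
  ∑ g ∈ Finset.univ.filter (fun g : Fin n → Fin m => StrictMono g),
    |(Matrix.of fun i j => r (g i) j).det|

lemma dirichlet_aux {κ : Type*} [Fintype κ] (x : κ → ℝ) (Q : ℕ) (hQ : 0 < Q) :
    ∃ q : ℕ, 0 < q ∧ q ≤ Q ^ Fintype.card κ ∧ ∃ g : κ → ℤ, ∀ i, |q * x i - g i| ≤ 1 / Q := by
  classical
  have hQ' : (0 : ℝ) < Q := by exact_mod_cast hQ
  have hlt : ∀ (k : ℕ) (i : κ), ⌊Int.fract (k * x i) * Q⌋₊ < Q := by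
    intro k i
    rw [Nat.floor_lt (mul_nonneg (Int.fract_nonneg _) hQ'.le)]
    have := Int.fract_lt_one (k * x i)
    nlinarith
  let f : Fin (Q ^ Fintype.card κ + 1) → (κ → Fin Q) := fun k i =>
    ⟨⌊Int.fract ((k : ℕ) * x i) * Q⌋₊, hlt k i⟩
  obtain ⟨a, b, hab, hfab⟩ := Fintype.exists_ne_map_eq_of_card_lt f (by simp)
  have key : ∀ a b : Fin (Q ^ Fintype.card κ + 1), (a : ℕ) < b → f a = f b →
      ∃ q : ℕ, 0 < q ∧ q ≤ Q ^ Fintype.card κ ∧ ∃ g : κ → ℤ, ∀ i, |q * x i - g i| ≤ 1 / Q := by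
    intro a b hab hf
    refine ⟨b - a, by omega, by omega, fun i => ⌊((b : ℕ) : ℝ) * x i⌋ - ⌊((a : ℕ) : ℝ) * x i⌋, ?_⟩
    intro i
    have h1 := congrArg Fin.val (congrFun hf i)
    simp only [f] at h1
    have ha := Nat.floor_le (mul_nonneg (Int.fract_nonneg (((a : ℕ) : ℝ) * x i)) hQ'.le)
    have hb := Nat.floor_le (mul_nonneg (Int.fract_nonneg (((b : ℕ) : ℝ) * x i)) hQ'.le)
    have ha' := Nat.lt_floor_add_one (Int.fract (((a : ℕ) : ℝ) * x i) * Q)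
    have hb' := Nat.lt_floor_add_one (Int.fract (((b : ℕ) : ℝ) * x i) * Q)
    rw [← h1] at hb hb'
    rw [Nat.cast_sub hab.le]
    push_cast
    have e : ((b : ℕ) - (a : ℕ) : ℝ) * x i - (⌊((b : ℕ) : ℝ) * x i⌋ - ⌊((a : ℕ) : ℝ) * x i⌋) =
      Int.fract (((b : ℕ) : ℝ) * x i) - Int.fract (((a : ℕ) : ℝ) * x i) := by
      simp only [Int.fract]; ring
    rw [e, abs_le, le_div_iff₀ hQ', ← neg_div, div_le_iff₀ hQ']
    constructor <;> linarith
  rcases lt_or_gt_of_ne (fun h => hab (Fin.ext h) : (a : ℕ) ≠ b) with h | h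
  · exact key a b h hfab
  · exact key b a h hfab.symm

/-- exponents of the scale separation argument -/
def exq : ℕ → ℕ
  | 0 => 0
  | p + 1 => 1 + p * (exq p + 1)

lemma exq_mono : Monotone exq := by
  apply monotone_nat_of_le_succ
  intro p
  rcases p with _ | p
  · simp [exq]
  · have h : exq (p + 1 + 1) = 1 + (p + 1) * (exq (p + 1) + 1) := rfl
    rw [h]; nlinarith

lemma exq_le (p : ℕ) : exq p + 1 ≤ 2 * p.factorial := by
  induction p with
  | zero => simp [exq]
  | succ p ih =>
    rw [exq, Nat.factorial_succ]
    have := Nat.factorial_pos p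
    nlinarith

lemma combi {ι : Type*} [Fintype ι] (n : ℕ) (hn : 1 ≤ n) (hcard : Fintype.card ι ≤ n)
    (c : ι → ℝ) (hc : ∀ i, 0 ≤ c i) (i0 : ι) (hmax : ∀ i, c i ≤ c i0)
    (hM : ((4 * n : ℕ) : ℝ) ^ exq n ≤ c i0) :
    ∃ s : ℝ, 0 < s ∧ s < 1 ∧ ∃ g : ι → ℕ, 1 ≤ g i0 ∧ (∀ i, (g i : ℝ) ≤ s * c i) ∧
      ∑ i, (s * c i - g i) ≤ 1 - s := by
  classical
  set M := c i0 with hMdef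
  set A : ℕ := 4 * n with hA
  have hA1 : (1 : ℝ) ≤ A := by exact_mod_cast (by omega : 1 ≤ A)
  have hA0 : (0 : ℝ) < A := by linarith
  have hA4 : (4 : ℝ) ≤ A := by exact_mod_cast (by omega : 4 ≤ A)
  have hnR : (1 : ℝ) ≤ n := by exact_mod_cast hn
  have hAn : (A : ℝ) = 4 * n := by simp [hA]
  let θ : ℕ → ℝ := fun p => (A : ℝ) ^ exq p
  have θmono : Monotone θ := fun a b h => pow_le_pow_right₀ hA1 (exq_mono h)
  have θ1 : ∀ p, 1 ≤ θ p := fun p => one_le_pow₀ hA1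
  have hM1 : 1 ≤ M := (θ1 n).trans hM
  have hM0 : 0 < M := by linarith
  let G : ℕ → Finset ι := fun p => Finset.univ.filter (fun i => M ≤ θ p * c i)
  have hex : ∃ p, (G (p + 1)).card ≤ p + 1 := ⟨n - 1, by
    have := Finset.card_le_univ (G (n - 1 + 1)); omega⟩
  obtain ⟨p, hpc, hpn, hp2⟩ : ∃ p, (G (p + 1)).card ≤ p + 1 ∧ p + 1 ≤ n ∧ p + 1 ≤ (G p).card := by
    refine ⟨Nat.find hex, Nat.find_spec hex, ?_, ?_⟩
    · have : Nat.find hex ≤ n - 1 := Nat.find_min' hex (by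
        have := Finset.card_le_univ (G (n - 1 + 1)); omega)
      omega
    · rcases h : Nat.find hex with _ | p'
      · apply Finset.card_pos.2
        exact ⟨i0, by simp [G, θ, exq, hMdef]⟩
      · have := Nat.find_min hex (m := p') (by omega)
        omega
  have hsub : G p ⊆ G (p + 1) := by
    intro i hi
    simp only [G, Finset.mem_filter, Finset.mem_univ, true_and] at hi ⊢
    exact hi.trans (mul_le_mul_of_nonneg_right (θmono (Nat.le_succ p)) (hc i))
  have hG : G p = G (p + 1) := Finset.eq_of_subset_of_card_le hsub (hpc.trans hp2)
  have hGc : (G p).card = p + 1 := le_antisymm (hG ▸ hpc) hp2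
  have hi0 : i0 ∈ G p := by
    simp only [G, Finset.mem_filter, Finset.mem_univ, true_and]
    nlinarith [θ1 p]
  let κ := {i // i ∈ (G p).erase i0}
  have hκ : Fintype.card κ = p := by
    simp only [κ, Fintype.card_coe, Finset.card_erase_of_mem hi0, hGc]; omega
  obtain ⟨q, hq0, hqN, g, hg⟩ := dirichlet_aux (fun i : κ => c i / M) (A * A ^ exq p)
    (by positivity)
  rw [hκ] at hqN
  have hθ : θ (p + 1) = A * ((A * A ^ exq p : ℕ) : ℝ) ^ p := by
    simp only [θ, exq]; push_cast; rw [pow_add, pow_one, pow_mul', pow_succ, mul_comm (A : ℝ) (A ^ exq p)]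
  have hqN' : (q : ℝ) ≤ ((A * A ^ exq p : ℕ) : ℝ) ^ p := by exact_mod_cast hqN
  have hq1 : (1 : ℝ) ≤ q := by exact_mod_cast hq0
  have hinvA : 1 / (A : ℝ) ≤ 1 / 4 := one_div_le_one_div_of_le (by norm_num) hA4
  have hinvA0 : 0 < 1 / (A : ℝ) := by positivity
  have hqA : (q + 1 / A : ℝ) * A ≤ 2 * θ (p + 1) := by
    rw [hθ]; nlinarith
  have hθM : θ (p + 1) ≤ M := (θmono hpn).trans hM
  have hs0 : 0 < (q + 1 / A : ℝ) / M := by positivity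
  have hsle : (q + 1 / A : ℝ) / M ≤ 2 / A := by
    rw [div_le_div_iff₀ hM0 hA0]; linarith
  have h2A : 2 / (A : ℝ) = 1 / (2 * n) := by rw [hAn]; field_simp; norm_num
  have hn2 : 1 / (2 * (n : ℝ)) ≤ 1 / 2 := one_div_le_one_div_of_le (by norm_num) (by linarith)
  have gen : ∀ i, ∃ gi : ℕ, (i = i0 → 1 ≤ gi) ∧ (gi : ℝ) ≤ (q + 1 / A : ℝ) / M * c i ∧
      (q + 1 / A : ℝ) / M * c i - gi ≤ 2 / A := by
    intro i
    by_cases hi : i = i0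
    · refine ⟨q, fun _ => hq0, ?_⟩
      rw [hi, ← hMdef, div_mul_cancel₀ _ hM0.ne']
      constructor
      · linarith
      · have : 2 / (A : ℝ) = 1 / A + 1 / A := by ring
        linarith
    by_cases hiG : i ∈ G p
    · have h := hg ⟨i, Finset.mem_erase.2 ⟨hi, hiG⟩⟩
      set z := g ⟨i, Finset.mem_erase.2 ⟨hi, hiG⟩⟩
      simp only at h
      have hbig : M ≤ θ p * c i := by simpa [G] using hiG
      have hcM : c i / M ≤ 1 := (div_le_one hM0).2 (hmax i)
      have hQ : 1 / (((A * A ^ exq p : ℕ) : ℝ)) ≤ 1 / A * (c i / M) := by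
        have : 1 / (((A * A ^ exq p : ℕ) : ℝ)) = 1 / A * (1 / θ p) := by
          simp only [θ]; push_cast; field_simp
        rw [this]
        apply mul_le_mul_of_nonneg_left _ hinvA0.le
        rw [div_le_div_iff₀ (by linarith [θ1 p]) hM0]; linarith
      have e : (q + 1 / A : ℝ) / M * c i = q * (c i / M) + 1 / A * (c i / M) := by ring
      rw [abs_le] at h
      have h1A : 1 / (A : ℝ) * (c i / M) ≤ 1 / A := by nlinarith
      have h2 : 2 / (A : ℝ) = 1 / A + 1 / A := by ring
      have hz : 0 ≤ z := by
        have h3 : (-1 : ℝ) < z := by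
          have : 0 ≤ (q : ℝ) * (c i / M) := mul_nonneg (by linarith) (div_nonneg (hc i) hM0.le)
          linarith [h.2]
        have : (-1 : ℤ) < z := by exact_mod_cast h3
        omega
      have hzc : ((z.toNat : ℕ) : ℝ) = z := by
        have := Int.toNat_of_nonneg hz
        exact_mod_cast this
      refine ⟨z.toNat, fun h => absurd h hi, ?_, ?_⟩
      · rw [hzc, e]; linarith [h.1]
      · rw [hzc, e, h2]; linarith [h.2]
    · refine ⟨0, fun h => absurd h hi, ?_, ?_⟩
      · simpa using mul_nonneg hs0.le (hc i)
      · rw [hG] at hiG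
        have hsm : θ (p + 1) * c i < M := by simpa [G] using hiG
        rw [Nat.cast_zero, sub_zero, div_mul_eq_mul_div, div_le_div_iff₀ hM0 hA0]
        nlinarith [hc i]
  choose gg hg1 hg2 hg3 using gen
  refine ⟨_, hs0, by linarith, gg, hg1 i0 rfl, hg2, ?_⟩
  have : ∑ i, ((q + 1 / A : ℝ) / M * c i - gg i) ≤ ∑ _i : ι, 2 / (A : ℝ) :=
    Finset.sum_le_sum fun i _ => hg3 i
  rw [Finset.sum_const, Finset.card_univ, nsmul_eq_mul, h2A] at this
  have h5 : (Fintype.card ι : ℝ) * (1 / (2 * n)) ≤ n * (1 / (2 * n)) := by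
    apply mul_le_mul_of_nonneg_right _ (by positivity)
    exact_mod_cast hcard
  have h6 : (n : ℝ) * (1 / (2 * n)) = 1 / 2 := by field_simp
  linarith

lemma sum_subtype_supp {E : Type*} [AddCommMonoid E] {κ : Type*} [Fintype κ]
    (c : κ → ℝ) (f : κ → E) (hf : ∀ j, c j = 0 → f j = 0) [Fintype {j // c j ≠ 0}] :
    ∑ j, f j = ∑ j : {j // c j ≠ 0}, f j := by
  classical
  rw [← Finset.sum_subtype (Finset.univ.filter (fun j => c j ≠ 0)) (by simp) f]
  rw [Finset.sum_filter_of_ne]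
  intro j _ h h0
  exact h (hf j h0)

lemma conic_carath {E : Type*} [AddCommGroup E] [Module ℝ E] {κ : Type*} [Fintype κ]
    (r : κ → E) (c : κ → ℝ) (hc : ∀ j, 0 ≤ c j) :
    ∃ c' : κ → ℝ, (∀ j, 0 ≤ c' j) ∧ ∑ j, c' j • r j = ∑ j, c j • r j ∧
      LinearIndependent ℝ (fun j : {j // c' j ≠ 0} => r j) := by
  classical
  induction hN : (Finset.univ.filter (fun j => c j ≠ 0)).card using Nat.strong_induction_on
    generalizing c with
  | _ N ih =>
  by_cases hli : LinearIndependent ℝ (fun j : {j // c j ≠ 0} => r j)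
  · exact ⟨c, hc, rfl, hli⟩
  rw [Fintype.not_linearIndependent_iff] at hli
  obtain ⟨w0, hw0, j0, hj0⟩ := hli
  -- extend to all of κ
  obtain ⟨w, hws, hwsum, hwpos⟩ : ∃ w : κ → ℝ, (∀ j, c j = 0 → w j = 0) ∧
      ∑ j, w j • r j = 0 ∧ ∃ j, 0 < w j := by
    let w : κ → ℝ := fun j => if h : c j ≠ 0 then w0 ⟨j, h⟩ else 0
    have hw1 : ∀ j, c j = 0 → w j = 0 := fun j h => by simp [w, h]
    have hw2 : ∑ j, w j • r j = 0 := by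
      rw [← hw0, sum_subtype_supp c (fun j => w j • r j) (fun j hj => by simp [hw1 j hj])]
      apply Finset.sum_congr rfl
      intro j _
      simp only [w, dif_pos j.2]
    rcases lt_or_gt_of_ne hj0 with h | h
    · refine ⟨-w, fun j hj => by simp [hw1 j hj], by simp [hw2], j0, ?_⟩
      simp only [Pi.neg_apply, w, dif_pos j0.2]; linarith
    · refine ⟨w, hw1, hw2, j0, ?_⟩
      simp only [w, dif_pos j0.2]; exact h
  obtain ⟨j1, hj1, hmin⟩ := Finset.exists_min_image (Finset.univ.filter (fun j => 0 < w j))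
    (fun j => c j / w j) (by obtain ⟨j, hj⟩ := hwpos; exact ⟨j, by simp [hj]⟩)
  simp only [Finset.mem_filter, Finset.mem_univ, true_and] at hj1 hmin
  set τ := c j1 / w j1
  have hτ : 0 ≤ τ := div_nonneg (hc _) hj1.le
  have hc1 : ∀ j, 0 ≤ c j - τ * w j := by
    intro j
    rcases lt_or_ge 0 (w j) with h | h
    · have := hmin j h
      rw [le_div_iff₀ h] at this; linarith
    · nlinarith [hc j]
  have hz : c j1 - τ * w j1 = 0 := by simp only [τ]; field_simp; simp
  have hcj1 : c j1 ≠ 0 := fun h => hj1.ne' (hws _ h)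
  obtain ⟨c', h1, h2, h3⟩ := ih _ (by
    rw [← hN]
    apply Finset.card_lt_card
    refine ⟨fun j hj => ?_, fun h => ?_⟩
    · simp only [Finset.mem_filter, Finset.mem_univ, true_and] at hj ⊢
      exact fun h => hj (by rw [h, hws j h]; simp)
    · have := h (by simpa using hcj1 : j1 ∈ _)
      simp [hz] at this) (fun j => c j - τ * w j) hc1 rfl
  refine ⟨c', h1, ?_, h3⟩
  rw [h2]
  simp only [sub_smul, mul_smul, Finset.sum_sub_distrib, ← Finset.smul_sum, hwsum, smul_zero, sub_zero]

lemma IsIntVec.sub' {n : ℕ} {x y : Vec n} (hx : IsIntVec x) (hy : IsIntVec y) : IsIntVec (x - y) := by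
  intro i
  obtain ⟨a, ha⟩ := hx i
  obtain ⟨b, hb⟩ := hy i
  exact ⟨a - b, by simp [ha, hb]⟩

lemma IsIntVec.add' {n : ℕ} {x y : Vec n} (hx : IsIntVec x) (hy : IsIntVec y) : IsIntVec (x + y) := by
  intro i
  obtain ⟨a, ha⟩ := hx i
  obtain ⟨b, hb⟩ := hy i
  exact ⟨a + b, by simp [ha, hb]⟩

lemma isIntVec_intCast {n : ℕ} (y : Fin n → ℤ) : IsIntVec (intCast y) := fun i => ⟨y i, rfl⟩

lemma approx_dir {n : ℕ} (ω : Vec n) (δ : ℝ) (hδ : 0 < δ) (R : ℝ) :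
    ∃ u : Vec n, IsIntVec u ∧ ∃ t : ℝ, R ≤ t ∧ 1 ≤ t ∧ ‖u - t • ω‖ < δ := by
  obtain ⟨N, hN⟩ := exists_nat_ge (max R 1)
  obtain ⟨Q, hQ⟩ := exists_nat_one_div_lt hδ
  obtain ⟨q, hq0, -, g, hg⟩ := dirichlet_aux (fun i => N * ω i) (Q + 1) (Nat.succ_pos _)
  have hq1 : (1 : ℝ) ≤ q := by exact_mod_cast hq0
  have hN1 : (1 : ℝ) ≤ N := (le_max_right _ _).trans hN
  have hNR : R ≤ N := (le_max_left _ _).trans hN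
  refine ⟨intCast g, isIntVec_intCast g, q * N, by nlinarith, by nlinarith, ?_⟩
  refine lt_of_le_of_lt ?_ hQ
  rw [pi_norm_le_iff_of_nonneg (by positivity)]
  intro i
  have := hg i
  push_cast at this
  rw [abs_sub_comm] at this
  simpa [intCast, mul_assoc] using this

lemma scale_mem {n : ℕ} {K : Set (Vec n)} (hK : Convex ℝ K) {v x : Vec n} (hv : v ∈ K) {l l' : ℝ}
    (hl' : 0 ≤ l') (hll : l' ≤ l) (h : v + l • x ∈ K) : v + l' • x ∈ K := by
  rcases hl'.eq_or_lt with h0 | h0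
  · simpa [← h0] using hv
  have hl : 0 < l := lt_of_lt_of_le h0 hll
  have := hK.add_smul_sub_mem hv h (t := l' / l) ⟨by positivity, (div_le_one hl).2 hll⟩
  rw [add_sub_cancel_left, smul_smul, div_mul_cancel₀ _ hl.ne'] at this
  exact this

/-- tangent cone -/
def tcone {n : ℕ} (K : Set (Vec n)) (v : Vec n) : Set (Vec n) := {x | ∃ l : ℝ, 0 < l ∧ v + l • x ∈ K}

lemma tcone_convex {n : ℕ} {K : Set (Vec n)} (hK : Convex ℝ K) {v : Vec n} (hv : v ∈ K) :
    Convex ℝ (tcone K v) := by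
  rintro x ⟨a, ha, hx⟩ y ⟨b, hb, hy⟩ s t hs ht hst
  refine ⟨min a b, lt_min ha hb, ?_⟩
  have h1 := scale_mem hK hv (lt_min ha hb).le (min_le_left a b) hx
  have h2 := scale_mem hK hv (lt_min ha hb).le (min_le_right a b) hy
  have := hK h1 h2 hs ht hst
  convert this using 1
  have : v = s • v + t • v := by rw [← add_smul, hst, one_smul]
  conv_lhs => rw [this]
  module

lemma tcone_smul {n : ℕ} {K : Set (Vec n)} {v x : Vec n} (hx : x ∈ tcone K v) {t : ℝ} (ht : 0 < t) :
    t • x ∈ tcone K v := by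
  obtain ⟨a, ha, hx⟩ := hx
  refine ⟨a / t, by positivity, ?_⟩
  rwa [smul_smul, div_mul_cancel₀ _ ht.ne']

lemma recession_mem {n : ℕ} (K : Set (Vec n)) (hK : Convex ℝ K) (v ω : Vec n) (hv : IsIntVec v)
    (ε : ℝ) (hε : 0 < ε)
    (hin : ∀ t : ℝ, 0 ≤ t → ∀ x : Vec n, ‖x‖ < ε → IsIntVec (v + t • ω + x) → v + t • ω + x ∈ K) :
    ω ∈ tcone K v := by
  classical
  have hvK : v ∈ K := by
    have := hin 0 le_rfl 0 (by simpa using hε)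
    simpa [hv] using this
  let U : ℝ → Set (Vec n) := fun δ => {u | IsIntVec u ∧ ∃ t : ℝ, 0 < t ∧ ‖u - t • ω‖ < δ}
  have hU : ∀ δ ≤ ε, U δ ⊆ tcone K v := by
    rintro δ hδ u ⟨hu, t, ht, hut⟩
    refine ⟨1, one_pos, ?_⟩
    have := hin t ht.le (u - t • ω) (by linarith)
    rw [add_add_sub_cancel] at this
    simpa using this (hv.add' hu)
  have hUm : ∀ δ δ', δ ≤ δ' → U δ ⊆ U δ' := by
    rintro δ δ' h u ⟨hu, t, ht, hut⟩
    exact ⟨hu, t, ht, hut.trans_le h⟩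
  have hex : ∃ d : ℕ, ∃ δ, 0 < δ ∧ δ ≤ ε ∧ Module.finrank ℝ (Submodule.span ℝ (U δ)) = d :=
    ⟨_, ε, hε, le_rfl, rfl⟩
  obtain ⟨δ0, hδ0, hδε, hd⟩ := Nat.find_spec hex
  have hstab : ∀ δ, 0 < δ → δ ≤ δ0 → Submodule.span ℝ (U δ) = Submodule.span ℝ (U δ0) := by
    intro δ h1 h2
    apply Submodule.eq_of_le_of_finrank_le (Submodule.span_mono (hUm _ _ h2))
    rw [hd]
    exact Nat.find_min' hex ⟨δ, h1, h2.trans hδε, rfl⟩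
  let V := Submodule.span ℝ (U δ0)
  have hUV : ∀ u ∈ U δ0, u ∈ V := fun u hu => Submodule.subset_span hu
  have hωV : ω ∈ V := by
    have hcl : IsClosed (V : Set (Vec n)) := Submodule.closed_of_finiteDimensional V
    rw [← SetLike.mem_coe, ← hcl.closure_eq, Metric.mem_closure_iff]
    intro η hη
    obtain ⟨u, hu, t, -, ht1, hut⟩ := approx_dir ω (min η δ0) (lt_min hη hδ0) 1
    refine ⟨t⁻¹ • u, V.smul_mem _ (hUV u ⟨hu, t, by linarith, hut.trans_le (min_le_right _ _)⟩), ?_⟩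
    rw [dist_comm, dist_eq_norm]
    have : t⁻¹ • u - ω = t⁻¹ • (u - t • ω) := by
      rw [smul_sub, smul_smul, inv_mul_cancel₀ (by linarith), one_smul]
    rw [this, norm_smul, Real.norm_eq_abs, abs_of_pos (by positivity)]
    calc t⁻¹ * ‖u - t • ω‖ ≤ 1 * ‖u - t • ω‖ :=
          mul_le_mul_of_nonneg_right (inv_le_one_of_one_le₀ ht1) (norm_nonneg _)
      _ < η := by rw [one_mul]; exact hut.trans_le (min_le_left _ _)
  let P : Set V := {x | (x : Vec n) ∈ tcone K v}
  have hPc : Convex ℝ P := (tcone_convex hK hvK).linear_preimage V.subtype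
  have h0P : (0 : V) ∈ P := ⟨1, one_pos, by simpa using hvK⟩
  have hspan : Submodule.span ℝ P = ⊤ := by
    rw [eq_top_iff, ← Submodule.span_span_coe_preimage (R := ℝ) (s := U δ0)]
    exact Submodule.span_mono fun x hx => hU δ0 hδε hx
  have hIntv : (interior P).Nonempty := by
    rw [hPc.interior_nonempty_iff_affineSpan_eq_top]
    rw [← Set.insert_eq_of_mem h0P]
    apply SetLike.coe_injective
    rw [affineSpan_insert_zero, hspan]; rfl
  by_contra hω
  have hωP : (⟨ω, hωV⟩ : V) ∉ interior P := fun h => hω (by have h1 : (⟨ω, hωV⟩ : V) ∈ P := interior_subset h; exact h1)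
  obtain ⟨f, hf1⟩ := geometric_hahn_banach_open_point hPc.interior isOpen_interior hωP
  have hf2 : ∀ a ∈ P, f a ≤ f ⟨ω, hωV⟩ := by
    intro a ha
    have h1 : a ∈ closure (interior P) := by
      rw [hPc.closure_interior_eq_closure_of_nonempty_interior hIntv]; exact subset_closure ha
    have h2 : closure (interior P) ⊆ {a | f a ≤ f ⟨ω, hωV⟩} :=
      closure_minimal (fun a ha => (hf1 a ha).le) (isClosed_le f.continuous continuous_const)
    exact h2 h1
  have hf3 : ∀ a ∈ P, f a ≤ 0 := by
    intro a ha
    by_contra! h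
    obtain ⟨N, hN⟩ := exists_nat_gt (f ⟨ω, hωV⟩ / f a)
    rw [div_lt_iff₀ h] at hN
    have hw0 := hf2 0 h0P
    rw [map_zero] at hw0
    have hNpos : (0 : ℝ) < N := by
      by_contra! h'
      nlinarith
    have := hf2 ((N : ℝ) • a) (by
      have : ((((N : ℝ) • a : V)) : Vec n) ∈ tcone K v := tcone_smul ha hNpos
      exact this)
    rw [map_smul, smul_eq_mul] at this
    linarith
  have hbd : ∀ (u : Vec n) (hu : u ∈ V) (t : ℝ), |f ⟨u, hu⟩ - t * f ⟨ω, hωV⟩| ≤ ‖f‖ * ‖u - t • ω‖ := by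
    intro u hu t
    have := f.le_opNorm (⟨u, hu⟩ - t • ⟨ω, hωV⟩)
    rw [map_sub, map_smul, smul_eq_mul, Real.norm_eq_abs] at this
    exact this
  have hfω : f ⟨ω, hωV⟩ = 0 := by
    apply le_antisymm
    · by_contra! h
      have hη : 0 < min δ0 (f ⟨ω, hωV⟩ / (‖f‖ + 1)) := lt_min hδ0 (by positivity)
      obtain ⟨u, hu, t, -, ht1, hut⟩ := approx_dir ω _ hη 1
      have huU : u ∈ U δ0 := ⟨hu, t, by linarith, hut.trans_le (min_le_left _ _)⟩
      have h1 := hbd u (hUV u huU) t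
      have h2 := hf3 ⟨u, hUV u huU⟩ (hU δ0 hδε huU)
      have h3 := hut.trans_le (min_le_right _ _)
      rw [lt_div_iff₀ (by positivity)] at h3
      rw [abs_le] at h1
      nlinarith [norm_nonneg (u - t • ω), h1.1]
    · simpa using hf2 0 h0P
  obtain ⟨a0, ha0⟩ := hIntv
  have hf0 : f a0 < 0 := by have := hf1 a0 ha0; rwa [hfω] at this
  obtain ⟨u, huU, hfu⟩ : ∃ u : Vec n, ∃ h : u ∈ U (δ0 / 2), f ⟨u, hUV u (hUm _ _ (by linarith) h)⟩ ≠ 0 := by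
    by_contra! hall
    have h1 : U (δ0 / 2) ⊆ ((LinearMap.ker (f : V →ₗ[ℝ] ℝ)).map V.subtype : Set (Vec n)) := by
      intro u hu
      exact ⟨⟨u, hUV u (hUm _ _ (by linarith) hu)⟩, hall u hu, rfl⟩
    have h2 := Submodule.span_le.2 h1
    rw [hstab _ (by linarith) (by linarith)] at h2
    obtain ⟨y, hy, hy2⟩ := h2 a0.2
    have : y = a0 := Subtype.ext hy2
    rw [this] at hy
    exact hf0.ne hy
  have huU0 : u ∈ U δ0 := hUm _ _ (by linarith) huU
  have hfu' : f ⟨u, hUV u huU0⟩ < 0 := lt_of_le_of_ne (hf3 _ (hU δ0 hδε huU0)) hfu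
  obtain ⟨hui, t, ht, hut⟩ := huU
  have hη : 0 < min (δ0 / 2) (-f ⟨u, hUV u huU0⟩ / (‖f‖ + 1)) :=
    lt_min (by linarith) (div_pos (by linarith) (by positivity))
  obtain ⟨l, hl, t', htt', ht1, hlt⟩ := approx_dir ω _ hη (t + 1)
  have hl1 := hlt.trans_le (min_le_left _ _)
  have hl2 := hlt.trans_le (min_le_right _ _)
  rw [lt_div_iff₀ (by positivity)] at hl2
  have hlU : l ∈ U δ0 := ⟨hl, t', by linarith, by linarith⟩
  have hluU : l - u ∈ U δ0 := by
    refine ⟨hl.sub' hui, t' - t, by linarith, ?_⟩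
    have : l - u - (t' - t) • ω = (l - t' • ω) - (u - t • ω) := by module
    rw [this]
    exact (norm_sub_le _ _).trans_lt (by linarith)
  have h1 := hf3 ⟨l - u, hUV _ hluU⟩ (hU δ0 hδε hluU)
  have h2 : f ⟨l - u, hUV _ hluU⟩ = f ⟨l, hUV _ hlU⟩ - f ⟨u, hUV _ huU0⟩ := by
    rw [← map_sub]; rfl
  have h3 := hbd l (hUV _ hlU) t'
  rw [hfω, mul_zero, sub_zero, abs_le] at h3
  nlinarith [norm_nonneg (l - t' • ω), h3.1]

lemma compact_hull {n : ℕ} {Z : Set (Vec n)} (hZ : IsCompact Z) : IsCompact (convexHull ℝ Z) := by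
  classical
  rcases Z.eq_empty_or_nonempty with rfl | ⟨z0, hz0⟩
  · simp
  let φ : (Fin (n + 1) → ℝ) × (Fin (n + 1) → Vec n) → Vec n := fun p => ∑ i, p.1 i • p.2 i
  have hφ : Continuous φ := by fun_prop
  have hc : IsCompact (stdSimplex ℝ (Fin (n + 1)) ×ˢ (Set.univ.pi fun _ : Fin (n + 1) => Z)) :=
    (isCompact_stdSimplex ℝ _).prod (isCompact_univ_pi fun _ => hZ)
  convert hc.image hφ using 1
  apply Subset.antisymm
  · intro x hx
    obtain ⟨ι, _, z, w, hz, hai, hw, hw1, hx⟩ := eq_pos_convex_span_of_mem_convexHull hx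
    have hcard : Fintype.card ι ≤ Fintype.card (Fin (n + 1)) := by
      have h1 := hai.card_le_finrank_succ
      have h2 := Submodule.finrank_le (vectorSpan ℝ (Set.range z))
      rw [Module.finrank_fin_fun] at h2
      rw [Fintype.card_fin]
      exact h1.trans (Nat.succ_le_succ h2)
    obtain ⟨e⟩ := Function.Embedding.nonempty_of_card_le hcard
    have hw' : ∀ i, Function.extend e w 0 (e i) = w i := fun i => e.injective.extend_apply _ _ _
    have hz' : ∀ i, Function.extend e z (fun _ => z0) (e i) = z i := fun i => e.injective.extend_apply _ _ _
    have hout : ∀ i, i ∉ Set.range e → Function.extend e w 0 i = 0 := fun i hi => by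
      rw [Function.extend_apply' _ _ _ (by simpa using hi)]; rfl
    refine ⟨(Function.extend e w 0, Function.extend e z (fun _ => z0)), ⟨⟨?_, ?_⟩, ?_⟩, ?_⟩
    · intro i
      by_cases hi : i ∈ Set.range e
      · obtain ⟨k, rfl⟩ := hi
        simp only [hw']; exact (hw k).le
      · simp only [hout i hi]; exact le_rfl
    · rw [← hw1]
      exact (Fintype.sum_of_injective e e.injective _ _ hout (fun i => (hw' i).symm)).symm
    · intro i _
      by_cases hi : i ∈ Set.range e
      · obtain ⟨k, rfl⟩ := hi
        simp only [hz']; exact hz ⟨k, rfl⟩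
      · simp only [Function.extend_apply' _ _ _ (by simpa using hi)]; exact hz0
    · rw [← hx]
      refine (Fintype.sum_of_injective e e.injective _ _ (fun i hi => ?_) (fun i => ?_)).symm
      · simp only [hout i hi, zero_smul]
      · simp only [hw', hz']
  · rintro _ ⟨⟨w, z⟩, ⟨⟨hw, hw1⟩, hz⟩, rfl⟩
    exact (convex_convexHull ℝ Z).sum_mem (fun i _ => hw i) hw1
      (fun i _ => subset_convexHull ℝ Z (hz i trivial))

lemma tcone_pointed {n : ℕ} {K : Set (Vec n)} (hK : Convex ℝ K) {v : Vec n}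
    (hv : v ∈ Set.extremePoints ℝ K) {x : Vec n} (hx : x ∈ tcone K v) (hx' : -x ∈ tcone K v) : x = 0 := by
  obtain ⟨a, ha, hxa⟩ := hx
  obtain ⟨b, hb, hxb⟩ := hx'
  have h1 := scale_mem hK hv.1 (lt_min ha hb).le (min_le_left a b) hxa
  have h2 := scale_mem hK hv.1 (lt_min ha hb).le (min_le_right a b) hxb
  have h3 : v ∈ openSegment ℝ (v + min a b • x) (v + min a b • -x) :=
    ⟨1 / 2, 1 / 2, by norm_num, by norm_num, by norm_num, by module⟩
  have h4 := hv.2 h1 h2 h3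
  have h5 : min a b • x = 0 := by simpa using h4
  exact (smul_eq_zero.1 h5).resolve_left (lt_min ha hb).ne'

lemma dirs_closed {n : ℕ} (C S : Set (Vec n)) (hCc : IsClosed C)
    (hCs : ∀ x ∈ C, ∀ t : ℝ, 0 < t → t • x ∈ C) (hSC : S ⊆ C)
    (hSf : ∀ R : ℝ, {x | x ∈ S ∧ ‖x‖ ≤ R}.Finite) (v : Vec n) :
    IsCompact {z : Vec n | ‖z‖ = 1 ∧ (z ∈ C ∨ ∃ x ∈ S, ∃ t : ℝ, 0 < t ∧ z = t • (x - v))} := by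
  set Z := {z : Vec n | ‖z‖ = 1 ∧ (z ∈ C ∨ ∃ x ∈ S, ∃ t : ℝ, 0 < t ∧ z = t • (x - v))} with hZ
  have hsub : Z ⊆ Metric.sphere 0 1 := fun z hz => by simpa using hz.1
  refine (isCompact_sphere (0 : Vec n) 1).of_isClosed_subset ?_ hsub
  apply isClosed_of_closure_subset
  intro z hz
  have hz1 : ‖z‖ = 1 := by
    have : z ∈ Metric.sphere (0 : Vec n) 1 :=
      closure_minimal hsub Metric.isClosed_sphere hz
    simpa using this
  by_cases hzC : z ∈ C
  · exact ⟨hz1, Or.inl hzC⟩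
  obtain ⟨η, hη, hball⟩ := Metric.isOpen_iff.1 hCc.isOpen_compl z hzC
  have hfin : (Metric.ball z (η / 2) ∩ Z).Finite := by
    refine ((hSf (‖v‖ + ‖v‖ / (η / 2))).image (fun x => ‖x - v‖⁻¹ • (x - v))).subset ?_
    rintro y ⟨hy, hy1, hy2⟩
    rcases hy2 with hy2 | ⟨x, hx, t, ht, rfl⟩
    · exact absurd hy2 (hball (Metric.ball_subset_ball (by linarith) hy))
    have htx : t * ‖x - v‖ = 1 := by
      rw [norm_smul, Real.norm_eq_abs, abs_of_pos ht] at hy1; exact hy1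
    have hti : t = ‖x - v‖⁻¹ := eq_inv_of_mul_eq_one_left htx
    refine ⟨x, ⟨hx, ?_⟩, by simp only; rw [← hti]⟩
    have h1 : η / 2 ≤ t * ‖v‖ := by
      by_contra! h
      refine hball (a := t • x) ?_ (hCs x (hSC hx) t ht)
      rw [Metric.mem_ball, dist_eq_norm] at hy ⊢
      have e : t • x - z = (t • (x - v) - z) + t • v := by module
      rw [e]
      refine (norm_add_le _ _).trans_lt ?_
      rw [norm_smul t v, Real.norm_eq_abs, abs_of_pos ht]; linarith
    have h2 : ‖x - v‖ ≤ ‖v‖ / (η / 2) := by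
      rw [le_div_iff₀ (by linarith)]
      nlinarith [norm_nonneg (x - v)]
    have := norm_add_le v (x - v)
    rw [add_sub_cancel] at this
    linarith
  have h := Metric.isOpen_ball.inter_closure ⟨Metric.mem_ball_self (by linarith : 0 < η / 2), hz⟩
  rw [hfin.isClosed.closure_eq] at h
  exact h.2

lemma cone_gen {n m : ℕ} (C S K : Set (Vec n)) (hCc : IsClosed C)
    (hCs : ∀ x ∈ C, ∀ t : ℝ, 0 < t → t • x ∈ C) (hSC : S ⊆ C)
    (hSf : ∀ R : ℝ, {x | x ∈ S ∧ ‖x‖ ≤ R}.Finite) (v : Vec n) (hKS : K = convexHull ℝ S)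
    (hv : v ∈ Set.extremePoints ℝ K) (hvC : v ∈ C) (hv0 : v ≠ 0) (hCT : C ⊆ tcone K v)
    (E : Fin m → Set (Vec n)) (r : Fin m → (Fin n → ℤ)) (hE : HasEdgeData K v E r) :
    ∀ x ∈ K, ∃ c : Fin m → ℝ, (∀ j, 0 ≤ c j) ∧ x - v = ∑ j, c j • intCast (r j) := by
  classical
  have hK : Convex ℝ K := hKS ▸ convex_convexHull ℝ S
  set Z := {z : Vec n | ‖z‖ = 1 ∧ (z ∈ C ∨ ∃ x ∈ S, ∃ t : ℝ, 0 < t ∧ z = t • (x - v))} with hZ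
  have hZc : IsCompact Z := dirs_closed C S hCc hCs hSC hSf v
  have hTc : Convex ℝ (tcone K v) := tcone_convex hK hv.1
  have hST : ∀ x ∈ K, x - v ∈ tcone K v := fun x hx => ⟨1, one_pos, by simpa using hx⟩
  have hSK : S ⊆ K := hKS ▸ subset_convexHull ℝ S
  have hT0 : Convex ℝ {x | x ∈ tcone K v ∧ x ≠ 0} := by
    rintro x ⟨hx, hx0⟩ y ⟨hy, hy0⟩ a b ha hb hab
    refine ⟨hTc hx hy ha hb hab, fun h => ?_⟩
    rcases ha.eq_or_lt with rfl | ha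
    · have : b = 1 := by linarith
      simp [this] at h; exact hy0 h
    rcases hb.eq_or_lt with rfl | hb
    · have : a = 1 := by linarith
      simp [this] at h; exact hx0 h
    have h1 := tcone_smul hx ha
    have h2 := tcone_smul hy hb
    rw [eq_neg_of_add_eq_zero_right h] at h2
    exact hx0 ((smul_eq_zero.1 (tcone_pointed hK hv h1 h2)).resolve_left ha.ne')
  have hZT : Z ⊆ {x | x ∈ tcone K v ∧ x ≠ 0} := by
    rintro z ⟨hz1, hz⟩
    refine ⟨?_, fun h => by simp [h] at hz1⟩
    rcases hz with hz | ⟨x, hx, t, ht, rfl⟩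
    · exact hCT hz
    · exact tcone_smul (hST x (hSK hx)) ht
  have h0Z : (0 : Vec n) ∉ convexHull ℝ Z := fun h => (convexHull_min hZT hT0 h).2 rfl
  obtain ⟨f, u, hfu, hf⟩ := geometric_hahn_banach_point_closed (convex_convexHull ℝ Z)
    (compact_hull hZc).isClosed h0Z
  rw [map_zero] at hfu
  have hfZ : ∀ z ∈ Z, 0 < f z := fun z hz => hfu.trans (hf z (subset_convexHull ℝ Z hz))
  let Z' := (fun z => (f z)⁻¹ • z) '' Z
  have hZ'c : IsCompact Z' := by
    apply hZc.image_of_continuousOn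
    have h1 : ContinuousOn (fun z => (f z)⁻¹) Z :=
      f.continuous.continuousOn.inv₀ fun z hz => (hfZ z hz).ne'
    exact h1.smul (continuousOn_id (s := Z))
  let B := convexHull ℝ Z'
  have hBc : IsCompact B := compact_hull hZ'c
  have hBconv : Convex ℝ B := convex_convexHull ℝ Z'
  have hB1 : ∀ b ∈ B, f b = 1 := by
    have h1 : Convex ℝ {x | f x = 1} := by
      intro x hx y hy a b _ _ hab
      simp only [mem_ofPred_eq] at hx hy ⊢
      simp [hx, hy, hab]
    have h2 : Z' ⊆ {x | f x = 1} := by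
      rintro _ ⟨z, hz, rfl⟩
      simp [(hfZ z hz).ne']
    exact convexHull_min h2 h1
  have hBT : B ⊆ tcone K v := by
    apply convexHull_min _ hTc
    rintro _ ⟨z, hz, rfl⟩
    exact tcone_smul (hZT hz).1 (inv_pos.2 (hfZ z hz))
  -- nonempty
  have hnorm : ∀ x : Vec n, x ≠ 0 → (x ∈ C ∨ ∃ y ∈ S, x = y - v) → ∃ b ∈ B, ∃ t : ℝ, 0 ≤ t ∧ x = t • b := by
    intro x hx0 hx
    have hxn : 0 < ‖x‖ := norm_pos_iff.2 hx0
    have hz : ‖x‖⁻¹ • x ∈ Z := by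
      refine ⟨by rw [norm_smul, norm_inv, norm_norm, inv_mul_cancel₀ hxn.ne'], ?_⟩
      rcases hx with hx | ⟨y, hy, rfl⟩
      · exact Or.inl (hCs x hx _ (by positivity))
      · exact Or.inr ⟨y, hy, _, inv_pos.2 hxn, rfl⟩
    have hfz := hfZ _ hz
    refine ⟨_, subset_convexHull ℝ Z' ⟨_, hz, rfl⟩, ‖x‖ * f (‖x‖⁻¹ • x), by positivity, ?_⟩
    simp only [smul_smul]
    rw [mul_assoc, ← mul_assoc (f _), mul_inv_cancel₀ hfz.ne', one_mul, mul_inv_cancel₀ hxn.ne', one_smul]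
  obtain ⟨b0, hb0, -⟩ := hnorm v hv0 (Or.inl hvC)
  have hKB : ∀ x ∈ K, ∃ b ∈ B, ∃ t : ℝ, 0 ≤ t ∧ x - v = t • b := by
    have hconv : Convex ℝ {x : Vec n | ∃ b ∈ B, ∃ t : ℝ, 0 ≤ t ∧ x - v = t • b} := by
      rintro x ⟨b, hb, t, ht, hx⟩ y ⟨b', hb', t', ht', hy⟩ p q hp hq hpq
      have e : p • x + q • y - v = (p * t) • b + (q * t') • b' := by
        rw [mul_smul, mul_smul, ← hx, ← hy]
        have : v = p • v + q • v := by rw [← add_smul, hpq, one_smul]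
        conv_lhs => rw [this]
        module
      rcases (show 0 ≤ p * t + q * t' by positivity).eq_or_lt with h | h
      · refine ⟨b, hb, 0, le_rfl, ?_⟩
        have h1 : 0 ≤ p * t := by positivity
        have h2 : 0 ≤ q * t' := by positivity
        rw [e, (by linarith : p * t = 0), (by linarith : q * t' = 0)]; simp
      · refine ⟨(p * t / (p * t + q * t')) • b + (q * t' / (p * t + q * t')) • b',
          hBconv hb hb' (by positivity) (by positivity) (by rw [← add_div, div_self h.ne']),
          p * t + q * t', h.le, ?_⟩
        rw [e, smul_add, smul_smul, smul_smul, mul_div_cancel₀ _ h.ne', mul_div_cancel₀ _ h.ne']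
    have hsub : S ⊆ {x : Vec n | ∃ b ∈ B, ∃ t : ℝ, 0 ≤ t ∧ x - v = t • b} := by
      intro x hx
      by_cases h : x - v = 0
      · exact ⟨b0, hb0, 0, le_rfl, by simp [h]⟩
      · exact hnorm _ h (Or.inr ⟨x, hx, rfl⟩)
    intro x hx
    rw [hKS] at hx
    exact convexHull_min hsub hconv hx
  -- extreme points of B are edge directions
  have hext : ∀ b ∈ Set.extremePoints ℝ B, ∃ j, ∃ t : ℝ, 0 ≤ t ∧ b = t • intCast (r j) := by
    intro b hb
    have hb1 := hB1 b hb.1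
    have hbne : b ≠ 0 := fun h => by simp [h] at hb1
    obtain ⟨l, hl, hlK⟩ := hBT hb.1
    let Eb : Set (Vec n) := {y | y ∈ K ∧ ∃ t : ℝ, 0 ≤ t ∧ y = v + t • b}
    have hvE : v ∈ Eb := ⟨hv.1, 0, le_rfl, by simp⟩
    have hlE : v + l • b ∈ Eb := ⟨hlK, l, hl.le, rfl⟩
    have hface : IsFaceDim K Eb 1 := by
      refine ⟨⟨fun y hy => hy.1, ?_⟩, ?_, ?_⟩
      · rintro x hx y hy z ⟨hzK, t, ht, rfl⟩ ⟨p, q, hp, hq, hpq, hz⟩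
        refine ⟨hx, ?_⟩
        obtain ⟨b1, hb1, t1, ht1, hx1⟩ := hKB x hx
        obtain ⟨b2, hb2, t2, ht2, hy1⟩ := hKB y hy
        have e : t • b = (p * t1) • b1 + (q * t2) • b2 := by
          rw [mul_smul, mul_smul, ← hx1, ← hy1]
          have h1 : t • b = p • x + q • y - v := by rw [hz]; simp
          have : v = p • v + q • v := by rw [← add_smul, hpq, one_smul]
          rw [h1]
          conv_lhs => rw [this]
          module
        have ef := congrArg f e
        simp only [map_add, map_smul, smul_eq_mul, hB1 _ hb.1, hB1 _ hb1, hB1 _ hb2, mul_one] at ef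
        rcases ht1.eq_or_lt with h1 | h1
        · exact ⟨0, le_rfl, by rw [← h1] at hx1; simpa [sub_eq_zero] using hx1⟩
        have hpt : 0 < p * t1 := by positivity
        have htpos : 0 < t := by have : 0 ≤ q * t2 := by positivity
                                 linarith
        have hbb : b1 = b := by
          rcases ht2.eq_or_lt with h2 | h2
          · rw [← h2] at e ef
            simp only [mul_zero, zero_smul, add_zero] at e ef
            rw [← ef] at e
            exact (smul_right_injective _ htpos.ne' e).symm
          · refine hb.2 hb1 hb2 ⟨p * t1 / t, q * t2 / t, by positivity, by positivity, ?_, ?_⟩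
            · rw [← add_div, ← ef, div_self htpos.ne']
            · rw [div_eq_inv_mul, div_eq_inv_mul, mul_smul, mul_smul _ (q * t2), ← smul_add, ← e, smul_smul,
                inv_mul_cancel₀ htpos.ne', one_smul]
        refine ⟨t1, ht1, ?_⟩
        rw [← hbb, ← hx1]; simp
      · rintro x ⟨hx, t, ht, rfl⟩ y ⟨hy, t', ht', rfl⟩ p q hp hq hpq
        refine ⟨hK hx hy hp hq hpq, p * t + q * t', by positivity, ?_⟩
        have : v = p • v + q • v := by rw [← add_smul, hpq, one_smul]
        conv_rhs => rw [this]
        module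
      · rw [direction_affineSpan, vectorSpan_def]
        have : Submodule.span ℝ (Eb -ᵥ Eb) = Submodule.span ℝ {b} := by
          apply le_antisymm
          · rw [Submodule.span_le]
            rintro _ ⟨_, ⟨_, t, _, rfl⟩, _, ⟨_, t', _, rfl⟩, rfl⟩
            rw [SetLike.mem_coe, Submodule.mem_span_singleton]
            exact ⟨t - t', by simp only [vsub_eq_sub]; module⟩
          · rw [Submodule.span_singleton_le_iff_mem]
            have h := Submodule.subset_span (R := ℝ) (vsub_mem_vsub hlE hvE)
            have h2 := Submodule.smul_mem _ l⁻¹ h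
            convert h2 using 1
            simp [smul_smul, inv_mul_cancel₀ hl.ne']
        rw [this, finrank_span_singleton hbne]
    obtain ⟨j, hj⟩ := hE.2.2 Eb hface hvE
    have h1 := (hE.2.1 j).2.2.2 (hj ▸ hlE)
    obtain ⟨t, ht, h2⟩ := h1
    refine ⟨j, l⁻¹ * t, by positivity, ?_⟩
    have h3 : l • b = t • intCast (r j) := by simpa using h2
    rw [mul_smul, ← h3, smul_smul, inv_mul_cancel₀ hl.ne', one_smul]
  have hfin : (Set.extremePoints ℝ B).Finite := by
    refine (Set.finite_range fun j => (f (intCast (r j)))⁻¹ • (intCast (r j) : Vec n)).subset ?_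
    intro b hb
    obtain ⟨j, t, ht, hbt⟩ := hext b hb
    have h1 := hB1 b hb.1
    rw [hbt, map_smul, smul_eq_mul] at h1
    refine ⟨j, ?_⟩
    simp only
    rw [hbt, eq_inv_of_mul_eq_one_left h1]
  have hBR : ∀ b ∈ B, ∃ c : Fin m → ℝ, (∀ j, 0 ≤ c j) ∧ b = ∑ j, c j • intCast (r j) := by
    have h1 := closure_convexHull_extremePoints hBc hBconv
    rw [(hfin.isClosed_convexHull ℝ).closure_eq] at h1
    have hconv : Convex ℝ {b : Vec n | ∃ c : Fin m → ℝ, (∀ j, 0 ≤ c j) ∧ b = ∑ j, c j • intCast (r j)} := by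
      rintro x ⟨c, hc, rfl⟩ y ⟨d, hd, rfl⟩ p q hp hq _
      refine ⟨fun j => p * c j + q * d j, fun j => add_nonneg (mul_nonneg hp (hc j)) (mul_nonneg hq (hd j)), ?_⟩
      simp only [add_smul, mul_smul, Finset.sum_add_distrib, Finset.smul_sum]
    intro b hb
    rw [← h1] at hb
    refine convexHull_min ?_ hconv hb
    intro x hx
    obtain ⟨j, t, ht, rfl⟩ := hext x hx
    refine ⟨Pi.single j t, fun i => ?_, ?_⟩
    · by_cases h : i = j
      · subst h; simpa using ht
      · simp [h]
    · rw [Finset.sum_eq_single j] <;> simp +contextual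
  intro x hx
  obtain ⟨b, hb, t, ht, hxb⟩ := hKB x hx
  obtain ⟨c, hc, hbc⟩ := hBR b hb
  refine ⟨fun j => t * c j, fun j => mul_nonneg ht (hc j), ?_⟩
  rw [hxb, hbc, Finset.smul_sum]
  simp only [mul_smul]

lemma extreme_hull {n : ℕ} {S K E : Set (Vec n)} (hKS : K = convexHull ℝ S) (hE : IsExtreme ℝ K E) :
    E ⊆ convexHull ℝ (S ∩ E) := by
  have hK : Convex ℝ K := hKS ▸ convex_convexHull ℝ S
  have hconv : Convex ℝ {x | x ∈ K ∧ (x ∈ E → x ∈ convexHull ℝ (S ∩ E))} := by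
    rw [convex_iff_openSegment_subset]
    rintro x ⟨hx, hx'⟩ y ⟨hy, hy'⟩ z hz
    refine ⟨hK.openSegment_subset hx hy hz, fun hzE => ?_⟩
    have h1 := hE.2 hx hy hzE hz
    have h2 := hE.2 hy hx hzE (by rwa [openSegment_symm])
    exact (convex_convexHull ℝ (S ∩ E)).openSegment_subset (hx' h1) (hy' h2) hz
  have hS : S ⊆ {x | x ∈ K ∧ (x ∈ E → x ∈ convexHull ℝ (S ∩ E))} := fun x hx =>
    ⟨hKS ▸ subset_convexHull ℝ S hx, fun hxE => subset_convexHull ℝ _ ⟨hx, hxE⟩⟩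
  intro x hx
  have hxK : x ∈ convexHull ℝ S := hKS ▸ hE.1 hx
  exact (convexHull_min hS hconv hxK).2 hx

lemma primitive_bezout {n : ℕ} {r : Fin n → ℤ} (hr : IsPrimitiveVec r) :
    ∃ c : Fin n → ℤ, ∑ i, c i * r i = 1 := by
  obtain ⟨d, hd⟩ := (IsPrincipalIdealRing.principal (Ideal.span (Set.range r))).principal
  have hdu : IsUnit d := by
    apply hr
    intro i
    have : r i ∈ Ideal.span (Set.range r) := Ideal.subset_span ⟨i, rfl⟩
    rw [hd] at this
    exact Ideal.mem_span_singleton.1 this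
  have h1 : (1 : ℤ) ∈ Ideal.span (Set.range r) := by
    rw [hd]
    exact Ideal.mem_span_singleton.2 hdu.dvd
  exact Ideal.mem_span_range_iff_exists_fun.1 h1

lemma edge_pt {n m : ℕ} {S K : Set (Vec n)} (hKS : K = convexHull ℝ S)
    (hSint : ∀ x ∈ S, IsIntVec x) {v : Vec n} (hvint : IsIntVec v) (hvK : v ∈ K)
    {E : Fin m → Set (Vec n)} {r : Fin m → (Fin n → ℤ)} (hE : HasEdgeData K v E r) (j : Fin m) :
    v + intCast (r j) ∈ K := by
  have hK : Convex ℝ K := hKS ▸ convex_convexHull ℝ S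
  obtain ⟨⟨hext, hEc, hfin⟩, hvE, hprim, hsub⟩ := hE.2.1 j
  have hsubS := extreme_hull hKS hext
  have hx : ∃ x ∈ S ∩ E j, x ≠ v := by
    by_contra! hcon
    have h1 : S ∩ E j ⊆ {v} := fun x hx => hcon x hx
    have h2 : E j ⊆ {v} := hsubS.trans (convexHull_min h1 (convex_singleton v))
    have h3 : E j = {v} := subset_antisymm h2 (by simpa using hvE)
    rw [h3, direction_affineSpan, vectorSpan_singleton, finrank_bot] at hfin
    omega
  obtain ⟨x, ⟨hxS, hxE⟩, hxv⟩ := hx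
  obtain ⟨t, ht, rfl⟩ := hsub hxE
  have ht0 : 0 < t := by
    rcases ht.eq_or_lt with h | h
    · exact absurd (by simp [← h]) hxv
    · exact h
  have hIntv : IsIntVec (t • intCast (r j)) := by
    have := (hSint _ hxS).sub' hvint
    simpa using this
  obtain ⟨c, hc⟩ := primitive_bezout hprim
  choose g hg using hIntv
  have htint : t = ((∑ i, c i * g i : ℤ) : ℝ) := by
    have : (1 : ℝ) = ∑ i, (c i : ℝ) * (r j i : ℝ) := by exact_mod_cast hc.symm
    calc t = t * ∑ i, (c i : ℝ) * (r j i : ℝ) := by rw [← this, mul_one]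
      _ = ∑ i, (c i : ℝ) * (t * (r j i : ℝ)) := by
        rw [Finset.mul_sum]; exact Finset.sum_congr rfl fun i _ => by ring
      _ = ∑ i, (c i : ℝ) * (g i : ℝ) := by
        refine Finset.sum_congr rfl fun i _ => ?_
        have := hg i
        simp only [Pi.smul_apply, intCast, smul_eq_mul] at this
        rw [this]
      _ = _ := by push_cast; rfl
  have ht1 : 1 ≤ t := by
    rw [htint] at ht0 ⊢
    exact_mod_cast Int.add_one_le_iff.2 (by exact_mod_cast ht0 : (0 : ℤ) < ∑ i, c i * g i)
  have := scale_mem hK hvK zero_le_one ht1 (hext.1 hxE)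
  simpa using this

lemma hull_mem {n : ℕ} {κ : Type*} [Fintype κ] {K : Set (Vec n)} (hK : Convex ℝ K) {v : Vec n}
    (hv : v ∈ K) (R : κ → Vec n) (d : κ → ℝ) (hR : ∀ j, d j ≠ 0 → v + R j ∈ K) (hd : ∀ j, 0 ≤ d j)
    (hs : ∑ j, d j ≤ 1) : v + ∑ j, d j • R j ∈ K := by
  classical
  let w : Option κ → ℝ := fun o => o.elim (1 - ∑ j, d j) d
  let z : Option κ → Vec n := fun o => o.elim v (fun j => if d j = 0 then v else v + R j)
  have := hK.sum_mem (t := Finset.univ) (w := w) (z := z) (by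
      rintro (_ | j) _
      · simpa [w] using hs
      · exact hd j) (by rw [Fintype.sum_option]; simp [w]) (by
      rintro (_ | j) _
      · exact hv
      · by_cases h : d j = 0
        · simpa [z, h] using hv
        · simpa [z, h] using hR j h)
  rw [Fintype.sum_option] at this
  convert this using 1
  have h2 : ∀ j, w (some j) • z (some j) = d j • v + d j • R j := by
    intro j
    by_cases h : d j = 0
    · simp [w, z, h]
    · simp [w, z, h]
  rw [Finset.sum_congr rfl fun j _ => h2 j, Finset.sum_add_distrib, ← Finset.sum_smul]
  simp only [w, z, Option.elim]
  module

lemma starDet_nonneg {n m : ℕ} (r : Fin m → (Fin n → ℤ)) : 0 ≤ starDet r :=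
  Finset.sum_nonneg fun _ _ => abs_nonneg _

lemma det_le_starDet {n m : ℕ} (r : Fin m → (Fin n → ℤ)) (h : Fin n → Fin m) :
    |(Matrix.of fun i j => r (h i) j).det| ≤ starDet r := by
  classical
  by_cases hi : Function.Injective h
  · let σ := Tuple.sort h
    have hmono : StrictMono (h ∘ σ) :=
      (Tuple.monotone_sort h).strictMono_of_injective (hi.comp σ.injective)
    have h1 := Matrix.det_permute σ (Matrix.of fun i j => r (h i) j)
    have h2 : ((Matrix.of fun i j => r (h i) j).submatrix σ id) =
        (Matrix.of fun i j => r ((h ∘ σ) i) j) := rfl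
    rw [h2] at h1
    have h3 : |(Matrix.of fun i j => r (h i) j).det| = |(Matrix.of fun i j => r ((h ∘ σ) i) j).det| := by
      rw [h1, abs_mul]
      rcases Int.units_eq_one_or (Equiv.Perm.sign σ) with h | h <;> simp [h]
    rw [h3]
    unfold starDet
    exact Finset.single_le_sum (f := fun g : Fin n → Fin m => |(Matrix.of fun i j => r (g i) j).det|)
      (fun _ _ => abs_nonneg _) (by simpa using hmono)
  · have : (Matrix.of fun i j => r (h i) j).det = 0 := by
      simp only [Function.Injective, not_forall] at hi
      obtain ⟨a, b, hab, hne⟩ := hi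
      exact Matrix.det_zero_of_row_eq hne (by ext j; simp [hab])
    rw [this, abs_zero]
    exact starDet_nonneg r

lemma coeff_bound {n m : ℕ} (hn : 1 ≤ n) {C K : Set (Vec n)} (hK : Convex ℝ K) {v : Vec n}
    (hv : v ∈ Set.extremePoints ℝ K) (hCc : Convex ℝ C) (hC0 : (0 : Vec n) ∈ C)
    (hCK : ∀ x ∈ C, IsIntVec x → x ≠ 0 → x ∈ K) (hKC : K ⊆ C)
    (hvint : IsIntVec v) (r : Fin m → (Fin n → ℤ)) (hr : ∀ j, v + intCast (r j) ∈ K)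
    (c : Fin m → ℝ) (hc : ∀ j, 0 ≤ c j) (hvc : v = ∑ j, c j • intCast (r j))
    (hli : LinearIndependent ℝ (fun j : {j // c j ≠ 0} => intCast (r j))) (j : Fin m) :
    c j < ((4 * n : ℕ) : ℝ) ^ exq n := by
  classical
  by_contra! hbig
  have hpos : (0 : ℝ) < ((4 * n : ℕ) : ℝ) ^ exq n := by
    have : 0 < 4 * n := by omega
    positivity
  obtain ⟨j0, -, hj0⟩ := Finset.exists_max_image Finset.univ c ⟨j, Finset.mem_univ j⟩
  have hj0' : ∀ i, c i ≤ c j0 := fun i => hj0 i (Finset.mem_univ i)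
  have hM := hbig.trans (hj0' j)
  have hne : c j0 ≠ 0 := by linarith
  let i0 : {j // c j ≠ 0} := ⟨j0, hne⟩
  have hcard : Fintype.card {j // c j ≠ 0} ≤ n := by
    simpa using hli.fintype_card_le_finrank
  obtain ⟨s, hs0, hs1, g, hg0, hgle, hsum⟩ := combi n hn hcard (fun i : {j // c j ≠ 0} => c i)
    (fun i => hc i) i0 (fun i => hj0' i) hM
  let R : {j // c j ≠ 0} → Vec n := fun i => intCast (r i)
  have hvR : v = ∑ i : {j // c j ≠ 0}, c i • R i := by
    conv_lhs => rw [hvc]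
    exact sum_subtype_supp c _ (fun j hj => by simp [hj])
  set u : Vec n := ∑ i, (g i : ℝ) • R i with hu
  let δ : {j // c j ≠ 0} → ℝ := fun i => s * c i - g i
  have hδ : ∀ i, 0 ≤ δ i := fun i => sub_nonneg.2 (hgle i)
  have huint : IsIntVec u := by
    intro k
    refine ⟨∑ i, (g i : ℤ) * r i k, ?_⟩
    simp [hu, R, intCast, Finset.sum_apply]
  have hsv : s • v = u + ∑ i, δ i • R i := by
    rw [hvR, Finset.smul_sum, hu, ← Finset.sum_add_distrib]
    refine Finset.sum_congr rfl fun i _ => ?_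
    simp only [δ]
    module
  have hw : v - u = (1 - s) • v + ∑ i, δ i • R i := by
    have : v = s • v + (1 - s) • v := by module
    rw [hsv] at this
    conv_lhs => rw [this]
    abel
  have hvC : v ∈ C := hKC hv.1
  have h1s : 0 < 1 - s := by linarith
  have hwC : v - u ∈ C := by
    have h1 : v + ∑ i, (δ i / (1 - s)) • R i ∈ C := by
      apply hull_mem hCc hvC R _ (fun i _ => hKC (hr i)) (fun i => div_nonneg (hδ i) h1s.le)
      rw [← Finset.sum_div, div_le_one h1s]
      exact hsum
    have h2 := hCc hC0 h1 hs0.le h1s.le (by ring)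
    convert h2 using 1
    rw [hw, smul_zero, zero_add, smul_add, Finset.smul_sum]
    congr 1
    refine Finset.sum_congr rfl fun i _ => ?_
    rw [smul_smul, mul_div_cancel₀ _ h1s.ne']
  have hli' := Fintype.linearIndependent_iff.1 hli
  have hw0 : v - u ≠ 0 := by
    intro h0
    have h1 : ∑ i : {j // c j ≠ 0}, (c i - g i) • R i = 0 := by
      simp_rw [sub_smul]
      rw [Finset.sum_sub_distrib, ← hvR, ← hu, h0]
    have h2 := hli' _ h1 i0
    have h3 := hgle i0
    have h4 : 0 < c i0 := lt_of_lt_of_le hpos hM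
    nlinarith
  have hwK := hCK _ hwC (hvint.sub' huint) hw0
  have h1 : -u ∈ tcone K v := ⟨1, one_pos, by rw [one_smul, ← sub_eq_add_neg]; exact hwK⟩
  have h2 : u ∈ tcone K v := by
    set G : ℝ := ∑ i, (g i : ℝ) with hG
    have hG1 : 0 < G := by
      have : (g i0 : ℝ) ≤ G := Finset.single_le_sum (f := fun i => (g i : ℝ)) (fun _ _ => by positivity)
        (Finset.mem_univ i0)
      have h' : (1 : ℝ) ≤ g i0 := by exact_mod_cast hg0
      linarith
    refine ⟨1 / G, by positivity, ?_⟩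
    have := hull_mem hK hv.1 R (fun i => g i / G) (fun i _ => hr i) (fun i => by positivity)
      (by rw [← Finset.sum_div, ← hG, div_self hG1.ne'])
    convert this using 2
    rw [hu, Finset.smul_sum]
    refine Finset.sum_congr rfl fun i _ => ?_
    rw [smul_smul]; congr 1; ring
  have h3 := hli' _ (tcone_pointed hK hv h2 h1) i0
  have : g i0 = 0 := by exact_mod_cast h3
  omega

lemma face_pt {n m : ℕ} {K F : Set (Vec n)} (hK : Convex ℝ K) (hF : IsExtreme ℝ K F)
    (hFc : Convex ℝ F) {v : Vec n} (hvF : v ∈ F) (R : Fin m → Vec n) (hR : ∀ j, v + R j ∈ K)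
    {x : Vec n} (hx : x ∈ F) (c : Fin m → ℝ) (hc : ∀ j, 0 ≤ c j) (hxc : x - v = ∑ j, c j • R j)
    (j0 : Fin m) (hj0 : 0 < c j0) : v + R j0 ∈ F := by
  classical
  set σ := ∑ j, c j with hσ
  have hσ0 : 0 ≤ σ := Finset.sum_nonneg fun j _ => hc j
  set τ := 1 / (1 + σ) with hτ
  have hτ0 : 0 < τ := by positivity
  have hτ1 : τ ≤ 1 := by rw [hτ, div_le_one (by positivity)]; linarith
  have hτσ : τ * (1 + σ) = 1 := by rw [hτ]; field_simp
  have hz : v + τ • (x - v) ∈ F := hFc.add_smul_sub_mem hvF hx ⟨hτ0.le, hτ1⟩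
  set η := τ * c j0 with hη
  have hη0 : 0 < η := by positivity
  have hησ : η ≤ τ * σ := mul_le_mul_of_nonneg_left
    (Finset.single_le_sum (f := c) (fun j _ => hc j) (Finset.mem_univ j0)) hτ0.le
  have hy : v + ∑ j, ((1 + η) * τ * c j - (if j = j0 then η else 0)) • R j ∈ K := by
    apply hull_mem hK (hF.1 hvF) R _ (fun j _ => hR j)
    · intro j
      by_cases h : j = j0
      · subst h
        simp only [if_true]
        nlinarith [mul_pos hη0 hη0]
      · simp only [h, if_false, sub_zero]
        have := hc j
        positivity
    · rw [Finset.sum_sub_distrib, ← Finset.mul_sum, ← hσ]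
      simp only [Finset.sum_ite_eq', Finset.mem_univ, if_true]
      nlinarith
  have hseg : v + τ • (x - v) ∈ openSegment ℝ (v + R j0)
      (v + ∑ j, ((1 + η) * τ * c j - (if j = j0 then η else 0)) • R j) := by
    refine ⟨η / (1 + η), 1 / (1 + η), by positivity, by positivity, by field_simp; ring, ?_⟩
    have : ∑ j, ((1 + η) * τ * c j - (if j = j0 then η else 0)) • R j
        = ((1 + η) * τ) • (x - v) - η • R j0 := by
      rw [hxc, Finset.smul_sum]
      simp_rw [sub_smul]
      rw [Finset.sum_sub_distrib]
      congr 1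
      · exact Finset.sum_congr rfl fun j _ => by rw [smul_smul]
      · simp [ite_smul]
    rw [this]
    have e1 : (1 : ℝ) / (1 + η) * (1 + η) = 1 := by field_simp
    have e2 : η / (1 + η) = 1 - 1 / (1 + η) := by field_simp; ring
    have e3 : (1 : ℝ) / (1 + η) * η = 1 - 1 / (1 + η) := by field_simp; ring
    rw [smul_add, smul_add, smul_sub, smul_smul, smul_smul, ← mul_assoc, e1, e3, e2]
    module
  exact hF.2 (hR j0) hy hz hseg

lemma face_basis {m k : ℕ} {K F : Set (Vec (k + 1))} (hK : Convex ℝ K) (hF : IsFaceDim K F k)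
    {v : Vec (k + 1)} (hvF : v ∈ F) (R : Fin m → Vec (k + 1)) (hR : ∀ j, v + R j ∈ K)
    (hgen : ∀ x ∈ K, ∃ c : Fin m → ℝ, (∀ j, 0 ≤ c j) ∧ x - v = ∑ j, c j • R j) :
    ∃ ρ : Fin k → Fin m, (∀ i, v + R (ρ i) ∈ F) ∧ LinearIndependent ℝ (fun i => R (ρ i)) ∧
      Submodule.span ℝ (Set.range fun i => R (ρ i)) = (affineSpan ℝ F).direction := by
  obtain ⟨hext, hFc, hdim⟩ := hF
  let s : Set (Vec (k + 1)) := R '' {j | v + R j ∈ F}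
  have hs : Submodule.span ℝ s = (affineSpan ℝ F).direction := by
    apply le_antisymm
    · rw [Submodule.span_le]
      rintro _ ⟨j, hj, rfl⟩
      have := AffineSubspace.vsub_mem_direction (subset_affineSpan ℝ F hj) (subset_affineSpan ℝ F hvF)
      simpa using this
    · rw [direction_affineSpan, vectorSpan_eq_span_vsub_set_right ℝ hvF, Submodule.span_le]
      rintro _ ⟨x, hx, rfl⟩
      obtain ⟨c, hc, hxc⟩ := hgen x (hext.1 hx)
      simp only [vsub_eq_sub, SetLike.mem_coe]
      rw [hxc]
      refine Submodule.sum_mem _ fun j _ => ?_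
      rcases (hc j).eq_or_lt with h | h
      · simp [← h]
      · exact Submodule.smul_mem _ _ (Submodule.subset_span
          ⟨j, face_pt hK hext hFc hvF R hR hx c hc hxc j h, rfl⟩)
  obtain ⟨f, hf, hspan, hli⟩ := Submodule.exists_fun_fin_finrank_span_eq ℝ s
  have hk : Module.finrank ℝ (Submodule.span ℝ s) = k := by rw [hs]; exact hdim
  replace hspan := hspan.trans hs
  generalize Module.finrank ℝ (Submodule.span ℝ s) = k' at f hf hspan hli hk
  subst hk
  choose ρ hρ hρ' using hf
  have : (fun i => R (ρ i)) = f := funext hρ'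
  refine ⟨ρ, hρ, ?_, ?_⟩
  · rw [this]; exact hli
  · rw [this]; exact hspan

lemma mem_face {n k : ℕ} {K F : Set (Vec n)} (hF : IsExtreme ℝ K F)
    (hFc : Convex ℝ F) {v : Vec n} (hvF : v ∈ F) (R : Fin k → Vec n) (hR : ∀ j, v + R j ∈ F)
    {x : Vec n} (hx : x ∈ K) (hxR : x - v ∈ Submodule.span ℝ (Set.range R)) : x ∈ F := by
  obtain ⟨y, hy⟩ := (Submodule.mem_span_range_iff_exists_fun ℝ).1 hxR
  set Y := ∑ i, |y i| with hY
  have hY0 : 0 ≤ Y := Finset.sum_nonneg fun i _ => abs_nonneg _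
  have hyY : ∀ i, |y i| ≤ Y := fun i =>
    Finset.single_le_sum (f := fun i => |y i|) (fun _ _ => abs_nonneg _) (Finset.mem_univ i)
  set p : ℝ := 1 / (2 * (k + 1)) with hp
  have hp0 : 0 < p := by positivity
  have hpk : k * p ≤ 1 / 2 := by
    rw [hp, mul_one_div, div_le_div_iff₀ (by positivity) (by positivity)]; linarith
  set τ : ℝ := p / (1 + Y) with hτ
  have hτ0 : 0 < τ := by positivity
  have hτy : ∀ i, |τ * y i| ≤ p := by
    intro i
    rw [abs_mul, abs_of_pos hτ0, hτ, div_mul_eq_mul_div, div_le_iff₀ (by positivity)]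
    exact mul_le_mul_of_nonneg_left (by linarith [hyY i]) hp0.le
  have hz : v + ∑ i, p • R i ∈ F := by
    apply hull_mem hFc hvF R _ (fun j _ => hR j) (fun _ => hp0.le)
    simp
    linarith
  have hx0 : v + ∑ i, ((p + τ * y i) / (1 + τ)) • R i ∈ F := by
    apply hull_mem hFc hvF R _ (fun j _ => hR j)
    · intro i
      have := abs_le.1 (hτy i)
      exact div_nonneg (by linarith) (by positivity)
    · rw [← Finset.sum_div, div_le_one (by positivity)]
      calc ∑ i, (p + τ * y i) ≤ ∑ i : Fin k, (p + p) :=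
            Finset.sum_le_sum fun i _ => by linarith [(abs_le.1 (hτy i)).2]
        _ = 2 * (k * p) := by simp; ring
        _ ≤ 1 + τ := by linarith
  refine hF.2 hx (hF.1 hz) hx0 ⟨τ / (1 + τ), 1 / (1 + τ), by positivity, by positivity,
    by field_simp; ring, ?_⟩
  have hxx : x = v + ∑ i, y i • R i := by rw [hy]; abel
  rw [hxx, smul_add, smul_add, Finset.smul_sum, Finset.smul_sum]
  have : ∑ i, ((p + τ * y i) / (1 + τ)) • R i =
      ∑ i, (τ / (1 + τ)) • y i • R i + ∑ i, (1 / (1 + τ)) • p • R i := by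
    rw [← Finset.sum_add_distrib]
    refine Finset.sum_congr rfl fun i _ => ?_
    rw [smul_smul, smul_smul, ← add_smul]
    congr 1; field_simp; ring
  rw [this]
  have e2 : τ / (1 + τ) = 1 - 1 / (1 + τ) := by field_simp; ring
  rw [e2]
  module

lemma v_not_mem {k : ℕ} {K F : Set (Vec (k + 1))} (hF : IsExtreme ℝ K F)
    (hFc : Convex ℝ F) {v : Vec (k + 1)} (hvF : v ∈ F) (R : Fin k → Vec (k + 1))
    (hR : ∀ j, v + R j ∈ F)
    (hspan : Submodule.span ℝ (Set.range R) = (affineSpan ℝ F).direction)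
    (hbig : ∀ y : Fin (k + 1) → ℤ, ∃ N : ℝ, N • v ∈ K ∧ N • v + intCast y ∈ K ∧ N • v - intCast y ∈ K) :
    v ∉ Submodule.span ℝ (Set.range R) := by
  classical
  intro hv
  have hall : ∀ y : Fin (k + 1) → ℤ, intCast y ∈ Submodule.span ℝ (Set.range R) := by
    intro y
    obtain ⟨N, h1, h2, h3⟩ := hbig y
    have hN : N • v ∈ F := by
      apply mem_face hF hFc hvF R hR h1
      exact Submodule.sub_mem _ (Submodule.smul_mem _ _ hv) hv
    have hNy := hF.2 h2 h3 hN ⟨1 / 2, 1 / 2, by norm_num, by norm_num, by norm_num, by module⟩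
    rw [hspan]
    have := AffineSubspace.vsub_mem_direction (subset_affineSpan ℝ F hNy) (subset_affineSpan ℝ F hN)
    simpa using this
  have htop : Submodule.span ℝ (Set.range R) = ⊤ := by
    rw [eq_top_iff, ← (Pi.basisFun ℝ (Fin (k + 1))).span_eq, Submodule.span_le]
    rintro _ ⟨i, rfl⟩
    have := hall (Pi.single i 1)
    have e : Pi.basisFun ℝ (Fin (k + 1)) i = intCast (Pi.single i 1) := by
      ext j
      simp only [Pi.basisFun_apply, intCast]
      by_cases h : j = i
      · subst h; simp
      · simp [h]
    rw [e]
    exact this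
  have h1 := finrank_range_le_card (R := ℝ) R
  rw [Set.finrank, htop, finrank_top] at h1
  simp at h1

/-- determinant with variable first row -/
def detFun {k : ℕ} {A : Type*} [CommRing A] (R : Fin k → (Fin (k + 1) → A)) :
    (Fin (k + 1) → A) →ₗ[A] A :=
  (Matrix.detRowAlternating (n := Fin (k + 1)) (R := A)).toMultilinearMap.toLinearMap
    (Fin.cons (0 : Fin (k + 1) → A) R : Fin (k + 1) → (Fin (k + 1) → A)) 0

lemma detFun_apply {k : ℕ} {A : Type*} [CommRing A] (R : Fin k → (Fin (k + 1) → A))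
    (y : Fin (k + 1) → A) : detFun R y =
      (Matrix.of (Fin.cons y R : Fin (k + 1) → (Fin (k + 1) → A))).det := by
  simp only [detFun, MultilinearMap.toLinearMap_apply, Fin.update_cons_zero]
  rfl

lemma detFun_eq_zero {k : ℕ} (R : Fin k → Vec (k + 1)) (hR : LinearIndependent ℝ R)
    (x : Vec (k + 1)) : detFun R x = 0 ↔ x ∈ Submodule.span ℝ (Set.range R) := by
  have h1 := Matrix.linearIndependent_rows_iff_isUnit (K := ℝ)
    (A := Matrix.of (Fin.cons x R : Fin (k + 1) → (Fin (k + 1) → ℝ)))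
  have h2 := linearIndependent_finCons (K := ℝ) (x := x) (v := R)
  rw [Matrix.isUnit_iff_isUnit_det, ← detFun_apply, isUnit_iff_ne_zero] at h1
  have h3 : LinearIndependent ℝ (Matrix.of (Fin.cons x R : Fin (k + 1) → (Fin (k + 1) → ℝ))).row ↔
    LinearIndependent ℝ (Fin.cons x R : Fin (k + 1) → Vec (k + 1)) := Iff.rfl
  rw [← not_iff_not, ← ne_eq, ← h1, h3, h2]
  simp [hR]

lemma detFun_intCast {k : ℕ} (R : Fin k → (Fin (k + 1) → ℤ)) (y : Fin (k + 1) → ℤ) :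
    detFun (fun i => intCast (R i)) (intCast y) = ((detFun R y : ℤ) : ℝ) := by
  rw [detFun_apply, detFun_apply, Int.cast_det]
  congr 1
  ext i j
  refine Fin.cases ?_ (fun i => ?_) i <;> simp [intCast]

lemma index_bound {k : ℕ} (R : Fin k → (Fin (k + 1) → ℤ))
    (hR : LinearIndependent ℝ (fun i => intCast (R i)))
    (Q : AffineSubspace ℝ (Vec (k + 1)))
    (hspan : Submodule.span ℝ (Set.range fun i => intCast (R i)) = Q.direction)
    (v0 : Fin (k + 1) → ℤ) (hv : intCast v0 ∈ Q)
    (ha : detFun R v0 ≠ 0) :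
    (AddSubgroup.closure {y : Fin (k + 1) → ℤ | intCast y ∈ (Q : Set (Vec (k + 1)))}).index ≠ 0 ∧
    ((AddSubgroup.closure {y : Fin (k + 1) → ℤ | intCast y ∈ (Q : Set (Vec (k + 1)))}).index : ℤ)
      ≤ |detFun R v0| := by
  set Λ := AddSubgroup.closure {y : Fin (k + 1) → ℤ | intCast y ∈ (Q : Set (Vec (k + 1)))} with hΛ
  let a : (Fin (k + 1) → ℤ) →+ ℤ := (detFun R).toAddMonoidHom
  have haa : ∀ y, a y = detFun R y := fun _ => rfl
  have hle : (AddSubgroup.zmultiples (a v0)).comap a ≤ Λ := by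
    intro y hy
    rw [AddSubgroup.mem_comap, AddSubgroup.mem_zmultiples_iff] at hy
    obtain ⟨t, ht⟩ := hy
    have hv0 : v0 ∈ Λ := AddSubgroup.subset_closure hv
    have hz : detFun R (y - t • v0) = 0 := by
      rw [← haa, map_sub, map_zsmul, ht, sub_self]
    have hz' : intCast (y - t • v0) ∈ Q.direction := by
      rw [← hspan, ← detFun_eq_zero _ hR, detFun_intCast, hz, Int.cast_zero]
    have h1 : y - t • v0 + v0 ∈ Λ := by
      apply AddSubgroup.subset_closure
      have := AffineSubspace.vadd_mem_of_mem_direction hz' hv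
      have e : intCast (y - t • v0 + v0) = intCast (y - t • v0) +ᵥ intCast v0 := by
        ext i; simp [intCast]
      change intCast (y - t • v0 + v0) ∈ Q
      rw [e]; exact this
    have h2 : y = (y - t • v0 + v0) + (t - 1) • v0 := by
      rw [sub_smul, one_smul]; abel
    rw [h2]
    exact Λ.add_mem h1 (Λ.zsmul_mem hv0 _)
  have hd : Λ.index ∣ (a v0).natAbs := by
    refine (AddSubgroup.index_dvd_of_le hle).trans ?_
    rw [AddSubgroup.index_comap, ← Int.index_zmultiples]
    exact AddSubgroup.relIndex_dvd_index_of_normal _ _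
  have hpos : (a v0).natAbs ≠ 0 := Int.natAbs_ne_zero.2 ha
  refine ⟨fun h => hpos (by rw [h] at hd; exact Nat.eq_zero_of_zero_dvd hd), ?_⟩
  have := Nat.le_of_dvd (Nat.pos_of_ne_zero hpos) hd
  rw [Int.abs_eq_natAbs]
  exact_mod_cast this

lemma finite_int_ball {n : ℕ} (R : ℝ) : {x : Vec n | IsIntVec x ∧ ‖x‖ ≤ R}.Finite := by
  refine ((Set.finite_Icc (fun _ : Fin n => -⌈R⌉) (fun _ => ⌈R⌉)).image intCast).subset ?_
  rintro x ⟨hx, hxR⟩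
  choose g hg using hx
  refine ⟨g, ?_, by ext i; simp [intCast, hg]⟩
  have h : ∀ i, |(g i : ℝ)| ≤ R := fun i => by
    rw [← hg i, ← Real.norm_eq_abs]
    exact (norm_le_pi_norm x i).trans hxR
  constructor
  · intro i
    have h1 := (abs_le.1 (h i)).1
    have h2 := Int.le_ceil R
    have : (-⌈R⌉ : ℝ) ≤ g i := by linarith
    exact_mod_cast this
  · intro i
    have h1 := (abs_le.1 (h i)).2
    have h2 := Int.le_ceil R
    have : (g i : ℝ) ≤ ⌈R⌉ := by linarith
    exact_mod_cast this

lemma final_num (n q f : ℕ) (hn : 2 ≤ n) (hq : q + 1 ≤ 2 * f) (D : ℤ) (hD : 1 ≤ D) :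
    (n : ℤ) * ((4 * n : ℕ) : ℤ) ^ q * D < ((n : ℤ) * D) ^ (8 * f) := by
  have hn' : (2 : ℤ) ≤ n := by exact_mod_cast hn
  have h1 : ((4 * n : ℕ) : ℤ) ≤ (n : ℤ) ^ 3 := by
    push_cast
    nlinarith [mul_nonneg (by linarith : (0 : ℤ) ≤ (n : ℤ)) (by nlinarith : (0 : ℤ) ≤ (n : ℤ) ^ 2 - 4)]
  have h2 : (n : ℤ) * ((4 * n : ℕ) : ℤ) ^ q ≤ (n : ℤ) ^ (3 * q + 1) := by
    rw [pow_succ, pow_mul, mul_comm]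
    exact mul_le_mul_of_nonneg_right (pow_le_pow_left₀ (by positivity) h1 q) (by linarith)
  have h3 : (n : ℤ) ^ (3 * q + 1) < (n : ℤ) ^ (8 * f) :=
    pow_lt_pow_right₀ (by linarith) (by omega)
  have h4 : D ≤ D ^ (8 * f) := le_self_pow₀ hD (by omega)
  rw [mul_pow]
  calc (n : ℤ) * ((4 * n : ℕ) : ℤ) ^ q * D ≤ (n : ℤ) ^ (3 * q + 1) * D :=
        mul_le_mul_of_nonneg_right h2 (by linarith)
    _ < (n : ℤ) ^ (8 * f) * D := mul_lt_mul_of_pos_right h3 (by linarith)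
    _ ≤ _ := mul_le_mul_of_nonneg_left h4 (by positivity)

lemma det_bound {k m : ℕ} (hk : 1 ≤ k + 1) (r : Fin m → (Fin (k + 1) → ℤ)) (ρ : Fin k → Fin m)
    (v0 : Fin (k + 1) → ℤ) (c : Fin m → ℝ) (hc : ∀ j, 0 ≤ c j)
    (hvc : intCast v0 = ∑ j, c j • intCast (r j)) (Θ : ℕ) (hΘ : ∀ j, c j ≤ Θ)
    (hli : LinearIndependent ℝ (fun j : {j // c j ≠ 0} => intCast (r j))) :
    |detFun (fun i => r (ρ i)) v0| ≤ ((k + 1 : ℕ) : ℤ) * (Θ : ℤ) * starDet r := by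
  classical
  have hcard : Fintype.card {j // c j ≠ 0} ≤ k + 1 := by
    simpa using hli.fintype_card_le_finrank
  have hD0 : (0 : ℝ) ≤ (starDet r : ℝ) := by exact_mod_cast starDet_nonneg r
  have hD : ∀ j, |detFun (fun i => intCast (r (ρ i))) (intCast (r j))| ≤ (starDet r : ℝ) := by
    intro j
    rw [detFun_intCast (fun i => r (ρ i)), ← Int.cast_abs]
    have := det_le_starDet r (Fin.cons j ρ : Fin (k + 1) → Fin m)
    rw [detFun_apply]
    have e : (Matrix.of (Fin.cons (r j) (fun i => r (ρ i)) : Fin (k + 1) → (Fin (k + 1) → ℤ))) =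
        (Matrix.of fun i l => r ((Fin.cons j ρ : Fin (k + 1) → Fin m) i) l) := by
      ext i l
      refine Fin.cases ?_ (fun i => ?_) i <;> simp
    rw [e]
    exact_mod_cast this
  have h1 : |((detFun (fun i => r (ρ i)) v0 : ℤ) : ℝ)| ≤ (k + 1 : ℕ) * Θ * starDet r := by
    rw [← detFun_intCast, hvc, map_sum]
    rw [sum_subtype_supp c _ (fun j hj => by simp [hj])]
    calc |∑ j : {j // c j ≠ 0}, detFun (fun i => intCast (r (ρ i))) (c j • intCast (r j))|
        ≤ ∑ j : {j // c j ≠ 0}, |detFun (fun i => intCast (r (ρ i))) (c j • intCast (r j))| :=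
          Finset.abs_sum_le_sum_abs _ _
      _ ≤ ∑ j : {j // c j ≠ 0}, (Θ * starDet r : ℝ) := by
          refine Finset.sum_le_sum fun j _ => ?_
          rw [map_smul, smul_eq_mul, abs_mul, abs_of_nonneg (hc j)]
          exact mul_le_mul (hΘ j) (hD j) (abs_nonneg _) (by positivity)
      _ = (Fintype.card {j // c j ≠ 0} : ℝ) * (Θ * starDet r) := by
          rw [Finset.sum_const, Finset.card_univ, nsmul_eq_mul]
      _ ≤ (k + 1 : ℕ) * (Θ * starDet r) :=
          mul_le_mul_of_nonneg_right (by exact_mod_cast hcard) (by positivity)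
      _ = _ := by ring
  exact_mod_cast h1

/-- Corollary 1: if `v` is a vertex of the sail of an irrational
simplicial cone contained in exactly `m` edges of the Klein polyhedron `K`, and `F` is an
`(n-1)`-dimensional face of `K` containing `v`, then the integer distance `ρ(F, 0)` is
finite and `ρ(F, 0) < (n · det oSt_v)^{8·n!}`. -/
theorem statement7 (n : ℕ) (hn : 2 ≤ n)
    (ω : Fin n → Vec n) (hω : LinearIndependent ℝ ω)
    (C : Set (Vec n))
    (hC : C = {x | ∃ t : Fin n → ℝ, (∀ i, 0 ≤ t i) ∧ x = ∑ i, t i • ω i})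
    (hirr : ∀ i : Fin n, ∀ x ∈ Submodule.span ℝ (ω '' {j | j ≠ i}), IsIntVec x → x = 0)
    (K : Set (Vec n))
    (hK : K = convexHull ℝ {x | x ∈ C ∧ IsIntVec x ∧ x ≠ 0})
    (v : Vec n) (hv : v ∈ Set.extremePoints ℝ K)
    (m : ℕ) (E : Fin m → Set (Vec n)) (r : Fin m → (Fin n → ℤ))
    (hE : HasEdgeData K v E r)
    (F : Set (Vec n)) (hF : IsFaceDim K F (n - 1)) (hvF : v ∈ F) :
    (AddSubgroup.closure
        {y : Fin n → ℤ | intCast y ∈ (affineSpan ℝ F : Set (Vec n))}).index ≠ 0 ∧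
    ((AddSubgroup.closure
        {y : Fin n → ℤ | intCast y ∈ (affineSpan ℝ F : Set (Vec n))}).index : ℤ)
      < ((n : ℤ) * starDet r) ^ (8 * n.factorial) := by
  classical
  obtain ⟨k, rfl⟩ : ∃ k, n = k + 1 := ⟨n - 1, by omega⟩
  rw [Nat.add_sub_cancel] at hF
  set S : Set (Vec (k + 1)) := {x | x ∈ C ∧ IsIntVec x ∧ x ≠ 0} with hS
  have hKc : Convex ℝ K := hK ▸ convex_convexHull ℝ S
  have hSK : S ⊆ K := hK ▸ subset_convexHull ℝ S
  -- coordinates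
  let b := basisOfLinearIndependentOfCardEqFinrank hω (by simp)
  have hbω : ∀ i, b i = ω i := fun i => by simp [b]
  let φ := b.equivFun
  have hφsum : ∀ x, x = ∑ i, φ x i • ω i := by
    intro x
    conv_lhs => rw [← b.sum_equivFun x]
    exact Finset.sum_congr rfl fun i _ => by rw [hbω]
  have hCφ : ∀ x, x ∈ C ↔ ∀ i, 0 ≤ φ x i := by
    intro x
    rw [hC]
    constructor
    · rintro ⟨t, ht, rfl⟩ i
      have : φ (∑ i, t i • ω i) = t := by
        have : ∑ i, t i • ω i = φ.symm t := by
          rw [Module.Basis.equivFun_symm_apply]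
          exact Finset.sum_congr rfl fun i _ => by rw [hbω]
        rw [this, LinearEquiv.apply_symm_apply]
      rw [this]; exact ht i
    · intro h
      exact ⟨φ x, h, hφsum x⟩
  have hφc : Continuous φ := LinearMap.continuous_of_finiteDimensional φ.toLinearMap
  have hφi : ∀ i, Continuous fun x => φ x i := fun i => (continuous_apply i).comp hφc
  have hP : ∀ x, (∀ i, 0 < φ x i) → x ∈ C ∧ x ≠ 0 := by
    intro x hx
    refine ⟨(hCφ x).2 fun i => (hx i).le, ?_⟩
    rintro rfl
    have := hx 0
    simp at this
  have hCclosed : IsClosed C := by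
    have : C = ⋂ i, {x | 0 ≤ φ x i} := by ext x; simp [hCφ]
    rw [this]
    exact isClosed_iInter fun i => isClosed_le continuous_const (hφi i)
  have hCs : ∀ x ∈ C, ∀ t : ℝ, 0 < t → t • x ∈ C := by
    intro x hx t ht
    rw [hCφ] at hx ⊢
    intro i
    simpa using mul_nonneg ht.le (hx i)
  have hCc : Convex ℝ C := by
    intro x hx y hy s t hs ht _
    rw [hCφ] at hx hy ⊢
    intro i
    simpa using add_nonneg (mul_nonneg hs (hx i)) (mul_nonneg ht (hy i))
  have hC0 : (0 : Vec (k + 1)) ∈ C := by rw [hCφ]; simp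
  have hSC : S ⊆ C := fun x hx => hx.1
  have hKC : K ⊆ C := hK ▸ convexHull_min hSC hCc
  have hSf : ∀ R : ℝ, {x | x ∈ S ∧ ‖x‖ ≤ R}.Finite := fun R =>
    (finite_int_ball R).subset fun x hx => ⟨hx.1.2.1, hx.2⟩
  have hvS : v ∈ S := by
    rw [hK] at hv
    exact extremePoints_convexHull_subset hv
  obtain ⟨hvC, hvint, hv0⟩ := hvS
  have hvpos : ∀ i, 0 < φ v i := by
    intro i
    refine lt_of_le_of_ne ((hCφ v).1 hvC i) fun h0 => hv0 ?_
    refine hirr i v ?_ hvint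
    rw [hφsum v]
    refine Submodule.sum_mem _ fun j _ => ?_
    by_cases hj : j = i
    · subst hj; simp [← h0]
    · exact Submodule.smul_mem _ _ (Submodule.subset_span ⟨j, hj, rfl⟩)
  obtain ⟨ε, hε, hεP⟩ : ∃ ε > 0, ∀ x : Vec (k + 1), ‖x‖ < ε → ∀ i, 0 < φ (v + x) i := by
    have hopen : IsOpen (⋂ i, {x : Vec (k + 1) | 0 < φ x i}) :=
      isOpen_iInter_of_finite fun i => isOpen_lt continuous_const (hφi i)
    obtain ⟨ε, hε, h⟩ := Metric.isOpen_iff.1 hopen v (by simpa using hvpos)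
    refine ⟨ε, hε, fun x hx => ?_⟩
    have := h (show v + x ∈ Metric.ball v ε by simpa using hx)
    simpa using this
  have hCT : C ⊆ tcone K v := by
    intro w hw
    refine recession_mem K hKc v w hvint ε hε fun t ht x hx hIntv => ?_
    have hpos : ∀ i, 0 < φ (v + t • w + x) i := by
      intro i
      have h1 := hεP x hx i
      have h2 := mul_nonneg ht ((hCφ w).1 hw i)
      have e : φ (v + t • w + x) i = φ (v + x) i + t * φ w i := by
        simp [map_add]; ring
      rw [e]; linarith
    obtain ⟨h1, h2⟩ := hP _ hpos
    exact hSK ⟨h1, hIntv, h2⟩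
  have hgen := cone_gen C S K hCclosed hCs hSC hSf v hK hv hvC hv0 hCT E r hE
  have hr : ∀ j, v + intCast (r j) ∈ K := fun j =>
    edge_pt hK (fun x hx => hx.2.1) hvint hv.1 hE j
  -- expressing the vertex
  obtain ⟨c, hc, hvc, hli⟩ : ∃ c : Fin m → ℝ, (∀ j, 0 ≤ c j) ∧ v = ∑ j, c j • intCast (r j) ∧
      LinearIndependent ℝ (fun j : {j // c j ≠ 0} => intCast (r j)) := by
    have h2v : v + v ∈ K := by
      refine hSK ⟨?_, hvint.add' hvint, ?_⟩
      · rw [← two_smul ℝ]; exact hCs v hvC 2 two_pos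
      · rw [← two_smul ℝ]; exact smul_ne_zero two_ne_zero hv0
    obtain ⟨c, hc, hvc⟩ := hgen _ h2v
    obtain ⟨c', hc', hs, hli⟩ := conic_carath (fun j => intCast (r j)) c hc
    refine ⟨c', hc', ?_, hli⟩
    rw [hs, ← hvc]; abel
  have hbound := coeff_bound (by omega) hKc hv hCc hC0 (fun x h1 h2 h3 => hSK ⟨h1, h2, h3⟩) hKC hvint
    r hr c hc hvc hli
  obtain ⟨ρ, hρF, hρli, hρspan⟩ := face_basis hKc hF hvF (fun j => intCast (r j)) hr hgen
  have hbig : ∀ y : Fin (k + 1) → ℤ, ∃ N : ℝ, N • v ∈ K ∧ N • v + intCast y ∈ K ∧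
      N • v - intCast y ∈ K := by
    intro y
    obtain ⟨N, hN⟩ := exists_nat_gt (‖(intCast y : Vec (k + 1))‖ / ε)
    have hN0 : (0 : ℝ) < N := lt_of_le_of_lt (by positivity) hN
    rw [div_lt_iff₀ hε] at hN
    have hNint : IsIntVec ((N : ℝ) • v) := by
      intro i
      obtain ⟨a, ha⟩ := hvint i
      exact ⟨N * a, by simp [ha]⟩
    have key : ∀ u : Vec (k + 1), IsIntVec u → ‖u‖ < N * ε → (N : ℝ) • v + u ∈ K := by
      intro u hu hun
      have e : (N : ℝ) • v + u = (N : ℝ) • (v + (N : ℝ)⁻¹ • u) := by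
        rw [smul_add, smul_smul, mul_inv_cancel₀ hN0.ne', one_smul]
      have h1 : ‖(N : ℝ)⁻¹ • u‖ < ε := by
        rw [norm_smul, norm_inv, Real.norm_of_nonneg hN0.le, inv_mul_lt_iff₀ hN0]
        exact hun
      have h2 : ∀ i, 0 < φ ((N : ℝ) • v + u) i := by
        intro i
        rw [e, map_smul]
        exact mul_pos hN0 (hεP _ h1 i)
      obtain ⟨h3, h4⟩ := hP _ h2
      exact hSK ⟨h3, hNint.add' hu, h4⟩
    refine ⟨N, ?_, key _ (isIntVec_intCast y) hN, ?_⟩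
    · have := key 0 (fun i => ⟨0, by simp⟩) (by rw [norm_zero]; positivity)
      simpa using this
    · have := key (-intCast y) (fun i => ⟨-y i, by simp [intCast]⟩) (by rwa [norm_neg])
      rwa [← sub_eq_add_neg] at this
  have hvspan := v_not_mem hF.1 hF.2.1 hvF (fun i => intCast (r (ρ i))) hρF hρspan hbig
  obtain ⟨v0, rfl⟩ : ∃ v0 : Fin (k + 1) → ℤ, intCast v0 = v := by
    choose g hg using hvint
    exact ⟨g, by ext i; simp [intCast, hg]⟩
  have ha : detFun (fun i => r (ρ i)) v0 ≠ 0 := by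
    intro h0
    apply hvspan
    rw [← detFun_eq_zero _ hρli, detFun_intCast (fun i => r (ρ i)), h0, Int.cast_zero]
  obtain ⟨hi0, hile⟩ := index_bound (fun i => r (ρ i)) hρli (affineSpan ℝ F) hρspan v0
    (subset_affineSpan ℝ F hvF) ha
  refine ⟨hi0, lt_of_le_of_lt hile ?_⟩
  have hdb := det_bound (by omega) r ρ v0 c hc hvc ((4 * (k + 1)) ^ exq (k + 1))
    (fun j => by have := (hbound j).le; push_cast at this ⊢; exact this) hli
  have hD1 : 1 ≤ starDet r := by
    have h1 := abs_pos.2 ha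
    have h2 := starDet_nonneg r
    by_contra hlt
    have h3 : starDet r = 0 := by omega
    rw [h3, mul_zero] at hdb
    omega
  refine lt_of_le_of_lt hdb ?_
  have := final_num (k + 1) (exq (k + 1)) (k + 1).factorial hn (exq_le (k + 1)) (starDet r) hD1
  push_cast at this ⊢
  exact this
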